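/- arXiv:2310.18960 — 5 statements merged into one kernel-verified Lean document; each statement's English description precedes it below -/
import Mathlib

section
/- Let f₁, f₂, f₃ be the standard basis vectors of ℝ³, let T₁ = conv{0, f₂, f₃}, T₂ = conv{0, f₁, f₃}, T₃ = conv{0, f₁, f₂}, and let P = T₁ + T₂ + T₃ (Minkowski sum). Then A(P,z) = 4 for every nonzero z ∈ ℝ³. -/
open scoped Pointwise BigOperators

noncomputable section

/-- Scalar product on `ℝ^d`. -/
def dotp {d : ℕ} (z x : Fin d → ℝ) : ℝ := ∑ i, z i * x i

/-- Number of vertices (extreme points) of a set. -/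
def nVert {d : ℕ} (S : Set (Fin d → ℝ)) : ℕ := (Set.extremePoints ℝ S).ncard

/-- `t⁻ = min {z·x : x ∈ P}`. -/
def tMin {d : ℕ} (P : Set (Fin d → ℝ)) (z : Fin d → ℝ) : ℝ := sInf (dotp z '' P)

/-- `t⁺ = max {z·x : x ∈ P}`. -/
def tMax {d : ℕ} (P : Set (Fin d → ℝ)) (z : Fin d → ℝ) : ℝ := sSup (dotp z '' P)

/-- `A(P,z)`: the average number of vertices of the sections `P ∩ {x : z·x = t}`
over `t ∈ [t⁻, t⁺]`. -/
def avgVert {d : ℕ} (P : Set (Fin d → ℝ)) (z : Fin d → ℝ) : ℝ :=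
  (tMax P z - tMin P z)⁻¹ *
    ∫ t in tMin P z..tMax P z, ((nVert (P ∩ {x | dotp z x = t}) : ℝ))

/-- A convex polytope: the convex hull of a finite point set. -/
def IsPolytope {d : ℕ} (P : Set (Fin d → ℝ)) : Prop :=
  ∃ s : Finset (Fin d → ℝ), P = convexHull ℝ (s : Set (Fin d → ℝ))

/-- The vectors are nonzero and pairwise linearly independent. -/
def PairwiseIndep {d n : ℕ} (a : Fin n → (Fin d → ℝ)) : Prop :=
  (∀ i, a i ≠ 0) ∧ ∀ i j, i ≠ j → ∀ c : ℝ, a j ≠ c • a i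

/-- A zonotope: a translate of a Minkowski sum of segments `[0, aᵢ]` with pairwise
linearly independent nonzero generators. -/
def IsZonotope {d : ℕ} (P : Set (Fin d → ℝ)) : Prop :=
  ∃ (n : ℕ) (a : Fin n → (Fin d → ℝ)) (x : Fin d → ℝ),
    PairwiseIndep a ∧ P = {x} + ∑ i, segment ℝ 0 (a i)

/-- Central symmetry: there is `c` with `2c - P = P`. -/
def CentSymm {d : ℕ} (P : Set (Fin d → ℝ)) : Prop :=
  ∃ c : Fin d → ℝ, (fun y => (2 : ℝ) • c - y) '' P = P

/-- An edge of the hypergraph `ℱ` on the generator set `V`: a subset `W ⊆ V` spanning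
a 2-dimensional subspace, maximal with this property. -/
def IsHEdge (V W : Finset (Fin 3 → ℝ)) : Prop :=
  W ⊆ V ∧ Module.finrank ℝ (Submodule.span ℝ (W : Set (Fin 3 → ℝ))) = 2 ∧
    ∀ v ∈ V, v ∉ W →
      Module.finrank ℝ (Submodule.span ℝ (insert v (W : Set (Fin 3 → ℝ)))) = 3

/-- The degree of `v` in the hypergraph `ℱ` on `V`: the number of edges containing `v`. -/
def degF (V : Finset (Fin 3 → ℝ)) (v : Fin 3 → ℝ) : ℕ :=
  {W : Finset (Fin 3 → ℝ) | IsHEdge V W ∧ v ∈ W}.ncard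

/-- The set of edges of the polytope `P` that are parallel to `v`: one-dimensional
exposed faces `[u,w]` of `P` with `w - u` a nonzero multiple of `v`. -/
def edgesParallel {d : ℕ} (P : Set (Fin d → ℝ)) (v : Fin d → ℝ) : Set (Set (Fin d → ℝ)) :=
  {e | ∃ u w : Fin d → ℝ, u ≠ w ∧ e = segment ℝ u w ∧
    (∃ y : Fin d → ℝ, y ≠ 0 ∧ e = {x ∈ P | ∀ p ∈ P, dotp y p ≤ dotp y x}) ∧
    ∃ c : ℝ, c ≠ 0 ∧ w - u = c • v}

/-!
Away from the finitely many values of `z` at the vertices, the vertices of the section `P(z,t)` are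
the points at which the plane `z·x = t` crosses an edge of `P`. An edge `[u, v]` is crossed for a
set of `t` of length `|z·(v - u)|`, so that `A(P,z)` is the sum of these lengths over all edges
divided by the width `t⁺ - t⁻`.

Here `T₁ + T₂ + T₃` is one half of the cube `[0, 2]³`, cut along the hexagon orthogonal to the main
diagonal. Its 15 edges contribute `4 ∑ |z_i| + 2 ∑_{i < j} |z_i - z_j|`. The width is additive under
Minkowski sums, and that of the triangle `conv{0, f_i, f_j}` is
`(|z_i| + |z_j| + |z_i - z_j|) / 2`, so that of `P` is exactly a quarter of the edge sum.
-/

open MeasureTheory Module Set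

section Bounds

variable {𝕜 : Type*} [Field 𝕜] [LinearOrder 𝕜] [IsStrictOrderedRing 𝕜] {s : Set 𝕜} {a : 𝕜}

lemma upperBounds_convexHull (s : Set 𝕜) : upperBounds (convexHull 𝕜 s) = upperBounds s :=
  (upperBounds_mono_set (subset_convexHull 𝕜 s)).antisymm
    fun _ hb => convexHull_min hb (convex_Iic _)

lemma lowerBounds_convexHull (s : Set 𝕜) : lowerBounds (convexHull 𝕜 s) = lowerBounds s :=
  (lowerBounds_mono_set (subset_convexHull 𝕜 s)).antisymm
    fun _ hb => convexHull_min hb (convex_Ici _)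

lemma isLUB_convexHull_iff : IsLUB (convexHull 𝕜 s) a ↔ IsLUB s a := by
  rw [IsLUB, IsLUB, upperBounds_convexHull]

lemma isGLB_convexHull_iff : IsGLB (convexHull 𝕜 s) a ↔ IsGLB s a := by
  rw [IsGLB, IsGLB, lowerBounds_convexHull]

lemma max_zero_sub_min_zero (a b : 𝕜) :
    max 0 (max a b) - min 0 (min a b) = (|a| + |b| + |a - b|) / 2 := by
  grind

variable {ι G : Type*} [AddCommGroup G] [PartialOrder G] [IsOrderedAddMonoid G] {A : ι → Set G}
  {b : ι → G} {t : Finset ι}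

lemma isLUB_sum (h : ∀ i ∈ t, IsLUB (A i) (b i)) : IsLUB (∑ i ∈ t, A i) (∑ i ∈ t, b i) := by
  induction t using Finset.cons_induction with
  | empty => exact isLUB_singleton
  | cons i t hi ih =>
    rw [Finset.forall_mem_cons] at h
    rw [Finset.sum_cons, Finset.sum_cons]
    exact h.1.add (ih h.2)

lemma isGLB_sum (h : ∀ i ∈ t, IsGLB (A i) (b i)) : IsGLB (∑ i ∈ t, A i) (∑ i ∈ t, b i) := by
  induction t using Finset.cons_induction with
  | empty => exact isGLB_singleton
  | cons i t hi ih =>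
    rw [Finset.forall_mem_cons] at h
    rw [Finset.sum_cons, Finset.sum_cons]
    exact h.1.add (ih h.2)

end Bounds

section Segments

variable {𝕜 E : Type*} [Field 𝕜] [LinearOrder 𝕜] [IsStrictOrderedRing 𝕜]
  [AddCommGroup E] [Module 𝕜 E] {S : Set E} {u v u' v' : E}

lemma injOn_segment_of_ne (ℓ : Dual 𝕜 E) (h : ℓ u ≠ ℓ v) : InjOn ℓ (segment 𝕜 u v) := by
  rw [segment_eq_image']
  rintro _ ⟨r, -, rfl⟩ _ ⟨s, -, rfl⟩ hrs
  simp only [map_add, map_smul, map_sub, smul_eq_mul, add_right_inj] at hrs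
  rw [mul_right_cancel₀ (sub_ne_zero.2 h.symm) hrs]

lemma mem_extremePoints_inter_of_isExtreme_segment (hS : IsExtreme 𝕜 S (segment 𝕜 u v))
    (ℓ : Dual 𝕜 E) (h : ℓ u ≠ ℓ v) {x : E} (hx : x ∈ segment 𝕜 u v) :
    x ∈ extremePoints 𝕜 (S ∩ {y | ℓ y = ℓ x}) :=
  ⟨⟨hS.subset hx, rfl⟩, fun _ hy _ hz hxyz => injOn_segment_of_ne ℓ h
    (hS.left_mem_of_mem_openSegment hy.1 hz.1 hx hxyz) hx hy.2⟩

lemma segment_subset_of_isExtreme_segment (hS : IsExtreme 𝕜 S (segment 𝕜 u v))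
    (hu' : u' ∈ S) (hv' : v' ∈ S) {x : E} (hx : x ∈ segment 𝕜 u v)
    (hx' : x ∈ openSegment 𝕜 u' v') : segment 𝕜 u' v' ⊆ segment 𝕜 u v :=
  (convex_segment u v).segment_subset (hS.left_mem_of_mem_openSegment hu' hv' hx hx')
    (hS.right_mem_of_mem_openSegment hu' hv' hx hx')

lemma segment_eq_of_isExtreme_segment (hS : IsExtreme 𝕜 S (segment 𝕜 u v))
    (hS' : IsExtreme 𝕜 S (segment 𝕜 u' v')) {x : E} (hx : x ∈ openSegment 𝕜 u v)
    (hx' : x ∈ openSegment 𝕜 u' v') : segment 𝕜 u v = segment 𝕜 u' v' :=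
  (segment_subset_of_isExtreme_segment hS' (hS.subset (left_mem_segment 𝕜 u v))
    (hS.subset (right_mem_segment 𝕜 u v)) (openSegment_subset_segment 𝕜 _ _ hx') hx).antisymm
  (segment_subset_of_isExtreme_segment hS (hS'.subset (left_mem_segment 𝕜 u' v'))
    (hS'.subset (right_mem_segment 𝕜 u' v')) (openSegment_subset_segment 𝕜 _ _ hx) hx')

lemma image_openSegment_dual (ℓ : Dual 𝕜 E) (u v : E) :
    ℓ '' openSegment 𝕜 u v = openSegment 𝕜 (ℓ u) (ℓ v) :=
  image_openSegment 𝕜 ℓ.toAffineMap u v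

end Segments

lemma mem_convexHull_zero_pair_iff {𝕜 E : Type*} [Field 𝕜] [LinearOrder 𝕜] [IsStrictOrderedRing 𝕜]
    [AddCommGroup E] [Module 𝕜 E] {u v x : E} :
    x ∈ convexHull 𝕜 {0, u, v} ↔ ∃ p q : 𝕜, 0 ≤ p ∧ 0 ≤ q ∧ p + q ≤ 1 ∧ p • u + q • v = x := by
  constructor
  · rw [convexHull_insert (insert_nonempty _ _), convexHull_pair, mem_convexJoin]
    rintro ⟨_, rfl, _, ⟨c, d, hc, hd, hcd, rfl⟩, r, s, hr, hs, hrs, rfl⟩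
    refine ⟨s * c, s * d, by positivity, by positivity, ?_, by simp [smul_smul]⟩
    rw [← mul_add, hcd]
    linarith
  · rintro ⟨p, q, hp, hq, hpq, rfl⟩
    have := (convex_convexHull 𝕜 {0, u, v}).sum_mem (t := Finset.univ)
      (w := ![1 - p - q, p, q]) (z := ![0, u, v])
      (by simp [Fin.forall_fin_succ, hp, hq, sub_sub, hpq]) (by simp [Fin.sum_univ_three]; ring)
      fun i _ => subset_convexHull 𝕜 _ (by fin_cases i <;> simp)
    simpa [Fin.sum_univ_three] using this

lemma measurableSet_openSegment (a b : ℝ) : MeasurableSet (openSegment ℝ a b) :=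
  (convex_openSegment a b).ordConnected.measurableSet

lemma volume_openSegment (a b : ℝ) : volume (openSegment ℝ a b) = ENNReal.ofReal |b - a| := by
  rcases eq_or_ne a b with rfl | h
  · simp
  · rw [openSegment_eq_Ioo' h, Real.volume_Ioo, max_sub_min_eq_abs]

section Sections

variable {E κ : Type*} [AddCommGroup E] [Module ℝ E] {S : Set E} {u v : κ → E}

/-- The segments `[u e, v e]` are the edges of `S`: they are distinct faces, and every vertex of
every hyperplane section of `S` lies on one of them. -/
structure IsEdgeFamily (S : Set E) (u v : κ → E) : Prop where
  isExtreme : ∀ e, IsExtreme ℝ S (segment ℝ (u e) (v e))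
  injective : Function.Injective fun e => segment ℝ (u e) (v e)
  exists_mem_segment : ∀ (ℓ : Dual ℝ E) (t : ℝ), ∀ x ∈ extremePoints ℝ (S ∩ {y | ℓ y = t}),
    ∃ e, x ∈ segment ℝ (u e) (v e)

namespace IsEdgeFamily

lemma ncard_extremePoints_inter (h : IsEdgeFamily S u v) (ℓ : Dual ℝ E) {t : ℝ}
    (hu : ∀ e, ℓ (u e) ≠ t) (hv : ∀ e, ℓ (v e) ≠ t) :
    (extremePoints ℝ (S ∩ {x | ℓ x = t})).ncard =
      {e | t ∈ openSegment ℝ (ℓ (u e)) (ℓ (v e))}.ncard := by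
  have exists_crossing : ∀ e ∈ {e | t ∈ openSegment ℝ (ℓ (u e)) (ℓ (v e))},
      ∃ x ∈ openSegment ℝ (u e) (v e), ℓ x = t := fun e he => by
    rwa [mem_ofPred_eq, ← image_openSegment_dual] at he
  choose! p hp hpt using exists_crossing
  have ne_of_crossing : ∀ e, t ∈ openSegment ℝ (ℓ (u e)) (ℓ (v e)) → ℓ (u e) ≠ ℓ (v e) := by
    intro e he huv
    rw [huv, openSegment_same] at he
    exact hv e he.symm
  have vertices_eq : extremePoints ℝ (S ∩ {x | ℓ x = t}) =
      p '' {e | t ∈ openSegment ℝ (ℓ (u e)) (ℓ (v e))} := by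
    ext x
    constructor
    · intro hx
      obtain ⟨e, hxe⟩ := h.exists_mem_segment ℓ t x hx
      have hxt : ℓ x = t := hx.1.2
      have hxo : x ∈ openSegment ℝ (u e) (v e) := mem_openSegment_of_ne_left_right
        (fun H => hu e (H ▸ hxt)) (fun H => hv e (H ▸ hxt)) hxe
      have he : t ∈ openSegment ℝ (ℓ (u e)) (ℓ (v e)) := by
        rw [← image_openSegment_dual]
        exact ⟨x, hxo, hxt⟩
      exact ⟨e, he, injOn_segment_of_ne ℓ (ne_of_crossing e he)
        (openSegment_subset_segment ℝ _ _ (hp e he)) hxe ((hpt e he).trans hxt.symm)⟩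
    · rintro ⟨e, he, rfl⟩
      have := mem_extremePoints_inter_of_isExtreme_segment (h.isExtreme e) ℓ (ne_of_crossing e he)
        (openSegment_subset_segment ℝ _ _ (hp e he))
      rwa [hpt e he] at this
  have p_injOn : InjOn p {e | t ∈ openSegment ℝ (ℓ (u e)) (ℓ (v e))} := fun e he e' he' hee' =>
    h.injective <| segment_eq_of_isExtreme_segment (h.isExtreme e) (h.isExtreme e') (hp e he)
      (hee' ▸ hp e' he')
  rw [vertices_eq, p_injOn.ncard_image]

variable [Fintype κ]

lemma ae_ncard_extremePoints_inter (h : IsEdgeFamily S u v) (ℓ : Dual ℝ E) :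
    ∀ᵐ t : ℝ, ((extremePoints ℝ (S ∩ {x | ℓ x = t})).ncard : ℝ) =
      ∑ e, (openSegment ℝ (ℓ (u e)) (ℓ (v e))).indicator 1 t := by
  have ae_ne : ∀ᵐ t : ℝ, ∀ e, ℓ (u e) ≠ t ∧ ℓ (v e) ≠ t :=
    ae_all_iff.2 fun e => by
      filter_upwards [Measure.ae_ne volume (ℓ (u e)), Measure.ae_ne volume (ℓ (v e))]
        with t hu hv using ⟨hu.symm, hv.symm⟩
  filter_upwards [ae_ne] with t ht
  classical
  rw [h.ncard_extremePoints_inter ℓ (fun e => (ht e).1) fun e => (ht e).2,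
    ncard_eq_toFinset_card']
  simp [indicator_apply]

lemma integral_ncard_extremePoints_inter (h : IsEdgeFamily S u v) (ℓ : Dual ℝ E) :
    ∫ t, ((extremePoints ℝ (S ∩ {x | ℓ x = t})).ncard : ℝ) = ∑ e, |ℓ (v e) - ℓ (u e)| := by
  rw [integral_congr_ae (h.ae_ncard_extremePoints_inter ℓ), integral_finsetSum]
  · simp [integral_indicator_one, measurableSet_openSegment, measureReal_def, volume_openSegment]
  · intro e _
    exact (integrable_indicator_iff (measurableSet_openSegment _ _)).2
      (integrableOn_const (by simp [volume_openSegment]))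

end IsEdgeFamily
end Sections

section AvgVert

variable {d : ℕ} {κ : Type*} [Fintype κ] {P : Set (Fin d → ℝ)} {u v : κ → Fin d → ℝ}
  {z : Fin d → ℝ}

lemma coe_dotProductBilin_eq_dotp (z : Fin d → ℝ) : ⇑(dotProductBilin ℝ ℝ z) = dotp z := rfl

lemma intervalIntegral_nVert_inter (hbelow : BddBelow (dotp z '' P))
    (habove : BddAbove (dotp z '' P)) :
    ∫ t in tMin P z..tMax P z, (nVert (P ∩ {x | dotp z x = t}) : ℝ) =
      ∫ t, (nVert (P ∩ {x | dotp z x = t}) : ℝ) := by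
  have tMin_le_tMax : tMin P z ≤ tMax P z := Real.sInf_le_sSup _ hbelow habove
  rw [intervalIntegral.integral_of_le tMin_le_tMax, ← integral_Icc_eq_integral_Ioc]
  refine setIntegral_eq_integral_of_forall_compl_eq_zero fun t ht => ?_
  have empty_section : P ∩ {x | dotp z x = t} = ∅ := by
    rw [eq_empty_iff_forall_notMem]
    rintro x ⟨hx, rfl⟩
    exact ht ⟨csInf_le hbelow (mem_image_of_mem _ hx), le_csSup habove (mem_image_of_mem _ hx)⟩
  simp [nVert, empty_section]

lemma IsEdgeFamily.avgVert_eq (h : IsEdgeFamily P u v) (hbelow : BddBelow (dotp z '' P))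
    (habove : BddAbove (dotp z '' P)) :
    avgVert P z = (tMax P z - tMin P z)⁻¹ * ∑ e, |dotp z (v e) - dotp z (u e)| := by
  rw [avgVert, intervalIntegral_nVert_inter hbelow habove]
  congr 1
  exact h.integral_ncard_extremePoints_inter (dotProductBilin ℝ ℝ z)

end AvgVert

section Polyhedra

variable {ι E : Type*} [AddCommGroup E] [Module ℝ E]

/-- The polyhedron cut out by the linear inequalities `a k x ≤ b k`. -/
def polyhedron (a : ι → Dual ℝ E) (b : ι → ℝ) : Set E := {x | ∀ k, a k x ≤ b k}

/-- The face of `polyhedron a b` on which the inequalities with index in `K` are equalities. -/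
def polyhedronFace (a : ι → Dual ℝ E) (b : ι → ℝ) (K : Set ι) : Set E :=
  {x ∈ polyhedron a b | ∀ k ∈ K, a k x = b k}

variable (a : ι → Dual ℝ E) (b : ι → ℝ)

lemma convex_polyhedronFace (K : Set ι) : Convex ℝ (polyhedronFace a b K) := by
  have : polyhedronFace a b K = (⋂ k, {x | a k x ≤ b k}) ∩ ⋂ k ∈ K, {x | a k x = b k} := by
    ext; simp [polyhedronFace, polyhedron]
  rw [this]
  exact (convex_iInter fun k => convex_halfSpace_le (a k).isLinear _).inter <|
    convex_iInter₂ fun k _ => convex_hyperplane (a k).isLinear _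

lemma isExtreme_polyhedronFace (K : Set ι) :
    IsExtreme ℝ (polyhedron a b) (polyhedronFace a b K) := by
  refine ⟨fun x hx => hx.1, ?_⟩
  rintro x hx y hy _ ⟨-, hK⟩ ⟨r, s, hr, hs, hrs, rfl⟩
  refine ⟨hx, fun k hk => (hx k).antisymm ?_⟩
  have hk := hK k hk
  rw [map_add, map_smul, map_smul, smul_eq_mul, smul_eq_mul] at hk
  obtain rfl : s = 1 - r := by linarith
  nlinarith [mul_le_mul_of_nonneg_left (hy k) hs.le]

variable {a b} [Finite ι] {ℓ : Dual ℝ E} {t : ℝ} {x d : E}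

lemma exists_pos_add_sub_mem_polyhedron (hx : x ∈ polyhedron a b)
    (hd : ∀ k, a k x = b k → a k d = 0) :
    ∃ r : ℝ, 0 < r ∧ x + r • d ∈ polyhedron a b ∧ x - r • d ∈ polyhedron a b := by
  have eventually_le : ∀ k, ∀ᶠ r : ℝ in nhds 0, a k (x + r • d) ≤ b k := by
    intro k
    simp only [map_add, map_smul, smul_eq_mul]
    rcases (hx k).eq_or_lt with hk | hk
    · simp [hd k hk, hk]
    · have : Filter.Tendsto (fun r : ℝ => a k x + r * a k d) (nhds 0) (nhds (a k x)) :=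
        Continuous.tendsto' (by fun_prop) _ _ (by simp)
      filter_upwards [this.eventually (gt_mem_nhds hk)] with r hr using hr.le
  obtain ⟨r, hr, hball⟩ := Metric.eventually_nhds_iff_ball.1 (Filter.eventually_all.2 eventually_le)
  refine ⟨r / 2, by positivity, hball _ ?_, ?_⟩
  · simp [abs_of_pos hr, hr]
  · rw [sub_eq_add_neg, ← neg_smul]
    exact hball _ (by simp [abs_of_pos hr, hr])

lemma eq_zero_of_mem_extremePoints_polyhedron_inter
    (hx : x ∈ extremePoints ℝ (polyhedron a b ∩ {y | ℓ y = t}))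
    (hd : ∀ k, a k x = b k → a k d = 0) (hℓd : ℓ d = 0) : d = 0 := by
  obtain ⟨r, hr, hadd, hsub⟩ := exists_pos_add_sub_mem_polyhedron hx.1.1 hd
  have hxt : ℓ x = t := hx.1.2
  have hx_mid : x ∈ openSegment ℝ (x + r • d) (x - r • d) :=
    ⟨1 / 2, 1 / 2, by norm_num, by norm_num, by norm_num, by module⟩
  have : x + r • d = x :=
    hx.2 ⟨hadd, by simp [hℓd, hxt]⟩ ⟨hsub, by simp [hℓd, hxt]⟩ hx_mid
  exact (smul_eq_zero.1 (add_eq_left.1 this)).resolve_left hr.ne'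

lemma finrank_le_ncard_active_add_one
    (hx : x ∈ extremePoints ℝ (polyhedron a b ∩ {y | ℓ y = t})) :
    finrank ℝ E ≤ {k | a k x = b k}.ncard + 1 := by
  let activeForms : E →ₗ[ℝ] ({k | a k x = b k} → ℝ) × ℝ :=
    (LinearMap.pi fun k => a k.1).prod ℓ
  have activeForms_injective : Function.Injective activeForms := by
    refine (injective_iff_map_eq_zero _).2 fun d hd => ?_
    obtain ⟨hactive, hℓd⟩ := Prod.ext_iff.1 hd
    exact eq_zero_of_mem_extremePoints_polyhedron_inter hx
      (fun k hk => congrFun hactive ⟨k, hk⟩) hℓd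
  calc finrank ℝ E ≤ finrank ℝ (({k | a k x = b k} → ℝ) × ℝ) :=
        LinearMap.finrank_le_finrank_of_injective activeForms_injective
    _ = {k | a k x = b k}.ncard + 1 := by
        rw [finrank_prod, finrank_self, ← Nat.card_coe_set_eq]
        have := Fintype.ofFinite {k | a k x = b k}
        rw [finrank_fintype_fun_eq_card, Nat.card_eq_fintype_card]

end Polyhedra

section CyclicShift

/-- The vector whose coordinates at `i, i + 1, i + 2` are the entries of `a`. -/
def rotate {α : Type*} (i : Fin 3) (a : Fin 3 → α) : Fin 3 → α := fun j => a (j - i)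

@[simp] lemma rotate_apply_self {α : Type*} (i : Fin 3) (a b c : α) :
    rotate i ![a, b, c] i = a := by
  simp [rotate]

@[simp] lemma rotate_apply_add_one {α : Type*} (i : Fin 3) (a b c : α) :
    rotate i ![a, b, c] (i + 1) = b := by
  simp [rotate]

@[simp] lemma rotate_apply_add_two {α : Type*} (i : Fin 3) (a b c : α) :
    rotate i ![a, b, c] (i + 2) = c := by
  simp [rotate]

lemma forall_fin_three_iff {p : Fin 3 → Prop} (i : Fin 3) :
    (∀ j, p j) ↔ p i ∧ p (i + 1) ∧ p (i + 2) := by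
  rw [← (Equiv.addLeft i).forall_congr_right (q := p)]
  simp [Fin.forall_fin_succ]

lemma sum_fin_three_eq {M : Type*} [AddCommMonoid M] (x : Fin 3 → M) (i : Fin 3) :
    ∑ j, x j = x i + x (i + 1) + x (i + 2) := by
  rw [← Equiv.sum_comp (Equiv.addLeft i), Fin.sum_univ_three]
  simp

lemma dotp_rotate (z : Fin 3 → ℝ) (i : Fin 3) (a b c : ℝ) :
    dotp z (rotate i ![a, b, c]) = z i * a + z (i + 1) * b + z (i + 2) * c := by
  simp [dotp, sum_fin_three_eq _ i]

lemma sum_add_right_eq {G M : Type*} [AddGroup G] [Fintype G] [AddCommMonoid M] (x : G → M)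
    (k : G) : ∑ i, x (i + k) = ∑ i, x i :=
  Equiv.sum_comp (Equiv.addRight k) x

end CyclicShift

section HalfCube

/-- The facets of `halfCube`: `low i` is `x i = 0`, `high i` is `x i = 2`, and `diag` is the
hexagon `∑ i, x i = 3`. -/
inductive HalfCubeFacet
  | low (i : Fin 3)
  | high (i : Fin 3)
  | diag
  deriving DecidableEq, Fintype

namespace HalfCubeFacet

/-- The linear form of the inequality `k.form x ≤ k.bound` defining the facet `k`. -/
@[simp] def form : HalfCubeFacet → Dual ℝ (Fin 3 → ℝ)
  | low i => -LinearMap.proj i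
  | high i => LinearMap.proj i
  | diag => ∑ i, LinearMap.proj i

/-- The right-hand side of the inequality `k.form x ≤ k.bound` defining the facet `k`. -/
@[simp] def bound : HalfCubeFacet → ℝ
  | low _ => 0
  | high _ => 2
  | diag => 3

end HalfCubeFacet

open HalfCubeFacet

/-- The half of the cube `[0, 2]³` below the plane through its centre orthogonal to its main
diagonal. -/
def halfCube : Set (Fin 3 → ℝ) := polyhedron form bound

lemma mem_halfCube_iff {x : Fin 3 → ℝ} :
    x ∈ halfCube ↔ (∀ i, 0 ≤ x i) ∧ (∀ i, x i ≤ 2) ∧ ∑ i, x i ≤ 3 := by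
  refine ⟨fun h => ⟨fun i => ?_, fun i => h (high i), ?_⟩, fun h k => ?_⟩
  · simpa using h (low i)
  · simpa using h diag
  · cases k <;> simp [h]

/-- The edges of `halfCube`: `(i, m)` is the image of `(0, m)` under the cyclic shift of the
coordinates by `i`. -/
abbrev HalfCubeEdge : Type := Fin 3 × Fin 5

namespace HalfCubeEdge

/-- The two facets meeting along an edge. -/
def facets : HalfCubeEdge → Finset HalfCubeFacet
  | (i, m) => ![{low (i + 1), low (i + 2)}, {high i, low (i + 2)}, {high i, low (i + 1)},
      {high i, diag}, {low i, diag}] m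

/-- One endpoint of an edge. -/
def source : HalfCubeEdge → Fin 3 → ℝ
  | (i, m) => rotate i (![![0, 0, 0], ![2, 0, 0], ![2, 0, 0], ![2, 1, 0], ![0, 2, 1]] m)

/-- The other endpoint of an edge. -/
def target : HalfCubeEdge → Fin 3 → ℝ
  | (i, m) => rotate i (![![2, 0, 0], ![2, 1, 0], ![2, 0, 1], ![2, 0, 1], ![0, 1, 2]] m)

/-- An edge as the intersection of two facets. -/
def face (e : HalfCubeEdge) : Set (Fin 3 → ℝ) := polyhedronFace form bound e.facets

set_option maxRecDepth 10000 in
lemma facets_injective : Function.Injective facets := by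
  decide

lemma exists_facets_eq_or : ∀ k l : HalfCubeFacet, k ≠ l →
    (∃ e, facets e = {k, l}) ∨
      (∃ i, {low i, high i} = ({k, l} : Finset HalfCubeFacet)) ∨
      ∃ i j, i ≠ j ∧ {high i, high j} = ({k, l} : Finset HalfCubeFacet) := by
  decide

lemma exists_mem_face {x : Fin 3 → ℝ} (hx : x ∈ halfCube) {k l : HalfCubeFacet} (hkl : k ≠ l)
    (hk : k.form x = k.bound) (hl : l.form x = l.bound) : ∃ e : HalfCubeEdge, x ∈ e.face := by
  have active : ∀ m ∈ ({k, l} : Finset HalfCubeFacet), m.form x = m.bound := by grind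
  obtain ⟨h0, -, h3⟩ := mem_halfCube_iff.1 hx
  rcases exists_facets_eq_or k l hkl with ⟨e, he⟩ | ⟨i, hi⟩ | ⟨i, j, hij, hij'⟩
  · exact ⟨e, hx, he ▸ active⟩
  · have hlow : x i = 0 := by simpa using active (low i) (by simp [← hi])
    have hhigh : x i = 2 := active (high i) (by simp [← hi])
    linarith
  · have hi : x i = 2 := active (high i) (by simp [← hij'])
    have hj : x j = 2 := active (high j) (by simp [← hij'])
    have : x i + x j ≤ ∑ i, x i := Finset.add_le_sum (fun i _ => h0 i) (by simp) (by simp) hij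
    linarith

lemma source_mem_face (e : HalfCubeEdge) : e.source ∈ e.face := by
  obtain ⟨i, m⟩ := e
  refine ⟨mem_halfCube_iff.2 ?_, ?_⟩
  · rw [forall_fin_three_iff i, forall_fin_three_iff i, sum_fin_three_eq _ i]
    fin_cases m <;> norm_num [source]
  · fin_cases m <;> norm_num [facets, source, sum_fin_three_eq _ i]

lemma target_mem_face (e : HalfCubeEdge) : e.target ∈ e.face := by
  obtain ⟨i, m⟩ := e
  refine ⟨mem_halfCube_iff.2 ?_, ?_⟩
  · rw [forall_fin_three_iff i, forall_fin_three_iff i, sum_fin_three_eq _ i]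
    fin_cases m <;> norm_num [target]
  · fin_cases m <;> norm_num [facets, target, sum_fin_three_eq _ i]

lemma face_subset_segment (e : HalfCubeEdge) : e.face ⊆ segment ℝ e.source e.target := by
  rintro x ⟨hx, active⟩
  obtain ⟨h0, h2, h3⟩ := mem_halfCube_iff.1 hx
  obtain ⟨i, m⟩ := e
  rw [forall_fin_three_iff i] at h0 h2
  rw [sum_fin_three_eq _ i] at h3
  rw [segment_eq_image']
  -- On each of the five edges the parameter is read off from a coordinate that varies along it.
  refine ⟨![x i / 2, x (i + 1), x (i + 2), x (i + 2), x (i + 2) - 1] m, ⟨?_, ?_⟩, ?_⟩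
  · fin_cases m <;> simp [facets, sum_fin_three_eq _ i] at active ⊢ <;> linarith
  · fin_cases m <;> simp [facets, sum_fin_three_eq _ i] at active ⊢ <;> linarith
  · rw [funext_iff, forall_fin_three_iff i]
    refine ⟨?_, ?_, ?_⟩ <;> fin_cases m <;>
      simp [facets, source, target, sum_fin_three_eq _ i] at active ⊢ <;> linarith

lemma mem_facets_of_active {e : HalfCubeEdge} {k : HalfCubeFacet}
    (hsource : k.form e.source = k.bound) (htarget : k.form e.target = k.bound) :
    k ∈ e.facets := by
  obtain ⟨i, m⟩ := e
  revert hsource htarget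
  rcases k with k | k | _
  · revert k
    rw [forall_fin_three_iff i]
    fin_cases m <;> norm_num [reduceCtorEq, source, target, facets]
  · revert k
    rw [forall_fin_three_iff i]
    fin_cases m <;> norm_num [reduceCtorEq, source, target, facets]
  · fin_cases m <;> norm_num [reduceCtorEq, source, target, facets, sum_fin_three_eq _ i]

lemma segment_eq_face (e : HalfCubeEdge) : segment ℝ e.source e.target = e.face :=
  ((convex_polyhedronFace _ _ _).segment_subset e.source_mem_face e.target_mem_face).antisymm
    e.face_subset_segment

lemma face_injective : Function.Injective face := by
  have facets_subset : ∀ {e e' : HalfCubeEdge}, face e = face e' → e'.facets ⊆ e.facets := by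
    intro e e' h k hk
    exact mem_facets_of_active ((h ▸ e.source_mem_face).2 k hk) ((h ▸ e.target_mem_face).2 k hk)
  exact fun e e' h => facets_injective ((facets_subset h.symm).antisymm (facets_subset h))

lemma isEdgeFamily : IsEdgeFamily halfCube source target where
  isExtreme e := e.segment_eq_face ▸ isExtreme_polyhedronFace _ _ _
  injective := by
    simpa only [segment_eq_face] using face_injective
  exists_mem_segment ℓ t x hx := by
    have one_lt_ncard_active : 1 < {k : HalfCubeFacet | k.form x = k.bound}.ncard := by
      have := finrank_le_ncard_active_add_one hx
      rw [finrank_fin_fun] at this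
      lia
    obtain ⟨k, hk, l, hl, hkl⟩ := (one_lt_ncard).1 one_lt_ncard_active
    simpa only [segment_eq_face] using exists_mem_face hx.1.1 hkl hk hl

end HalfCubeEdge

end HalfCube

section TriangleSum

/-- The triangle with vertices at the origin and at the standard basis vectors other than the
`i`-th one, in the paper's notation `T_{i+1}`. -/
def coordTriangle (i : Fin 3) : Set (Fin 3 → ℝ) :=
  convexHull ℝ {0, Pi.single (i + 1) 1, Pi.single (i + 2) 1}

lemma mem_coordTriangle_iff {i : Fin 3} {x : Fin 3 → ℝ} :
    x ∈ coordTriangle i ↔ (∀ j, 0 ≤ x j) ∧ x i = 0 ∧ x (i + 1) + x (i + 2) ≤ 1 := by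
  rw [coordTriangle, mem_convexHull_zero_pair_iff]
  constructor
  · rintro ⟨p, q, hp, hq, hpq, rfl⟩
    rw [forall_fin_three_iff i]
    simp [hp, hq, hpq]
  · rintro ⟨h0, hi, h1⟩
    refine ⟨x (i + 1), x (i + 2), h0 _, h0 _, h1, ?_⟩
    rw [funext_iff, forall_fin_three_iff i]
    simp [hi]

lemma sum_coordTriangle_subset_halfCube : ∑ i, coordTriangle i ⊆ halfCube := by
  rw [Fin.sum_univ_three]
  rintro _ ⟨_, ⟨a, ha, b, hb, rfl⟩, c, hc, rfl⟩
  simp only [mem_coordTriangle_iff, Fin.forall_fin_succ, Fin.succ_zero_eq_one,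
    Fin.succ_one_eq_two, IsEmpty.forall_iff, and_true, zero_add, Fin.reduceAdd] at ha hb hc
  simp only [mem_halfCube_iff, Pi.add_apply, Fin.forall_fin_succ, Fin.succ_zero_eq_one,
    Fin.succ_one_eq_two, IsEmpty.forall_iff, and_true, Fin.sum_univ_three]
  grind

lemma exists_shares_le_one {𝕜 : Type*} [Field 𝕜] [LinearOrder 𝕜] [IsStrictOrderedRing 𝕜]
    {x y w : 𝕜} (hx : 0 ≤ x) (hx' : x ≤ 2) (hy : 0 ≤ y) (hy' : y ≤ 2) (hw : 0 ≤ w) (hw' : w ≤ 2)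
    (h : x + y + w ≤ 3) :
    ∃ p q r, 0 ≤ p ∧ p ≤ y ∧ 0 ≤ q ∧ q ≤ w ∧ 0 ≤ r ∧ r ≤ x ∧
      (y - p) + (w - q) ≤ 1 ∧ r + q ≤ 1 ∧ (x - r) + p ≤ 1 := by
  -- Greedy choice: `r` is the least value that the bounds on `x - r + p` and `y - p` allow, and
  -- then `p` and `q` are as large as possible.
  let r := max 0 (max (x - 1) (x + y - 2))
  refine ⟨min y (1 - x + r), min w (1 - r), r, ?_⟩
  grind

lemma halfCube_subset_sum_coordTriangle : halfCube ⊆ ∑ i, coordTriangle i := by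
  intro x hx
  obtain ⟨h0, h2, h3⟩ := mem_halfCube_iff.1 hx
  rw [Fin.sum_univ_three] at h3 ⊢
  obtain ⟨p, q, r, hp, hpy, hq, hqw, hr, hrx, h⟩ :=
    exists_shares_le_one (h0 0) (h2 0) (h0 1) (h2 1) (h0 2) (h2 2) h3
  refine ⟨_, ⟨![0, x 1 - p, x 2 - q], ?_, ![r, 0, q], ?_, rfl⟩, ![x 0 - r, p, 0], ?_, ?_⟩
  · simp [mem_coordTriangle_iff, Fin.forall_fin_succ, *]
  · simp [mem_coordTriangle_iff, Fin.forall_fin_succ, *]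
    linarith
  · simp [mem_coordTriangle_iff, Fin.forall_fin_succ, *]
  · ext i; fin_cases i <;> simp

lemma sum_coordTriangle_eq_halfCube : ∑ i, coordTriangle i = halfCube :=
  sum_coordTriangle_subset_halfCube.antisymm halfCube_subset_sum_coordTriangle

end TriangleSum

section Width

variable (z : Fin 3 → ℝ)

lemma image_dotp_coordTriangle (i : Fin 3) :
    dotp z '' coordTriangle i = convexHull ℝ {0, z (i + 1), z (i + 2)} := by
  rw [← coe_dotProductBilin_eq_dotp, coordTriangle, LinearMap.image_convexHull]
  simp [image_insert_eq]

lemma isLUB_image_dotp_coordTriangle (i : Fin 3) :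
    IsLUB (dotp z '' coordTriangle i) (max 0 (max (z (i + 1)) (z (i + 2)))) := by
  rw [image_dotp_coordTriangle, isLUB_convexHull_iff]
  exact isLUB_pair.insert 0

lemma isGLB_image_dotp_coordTriangle (i : Fin 3) :
    IsGLB (dotp z '' coordTriangle i) (min 0 (min (z (i + 1)) (z (i + 2)))) := by
  rw [image_dotp_coordTriangle, isGLB_convexHull_iff]
  exact isGLB_pair.insert 0

lemma isLUB_image_dotp_sum_coordTriangle :
    IsLUB (dotp z '' ∑ i, coordTriangle i) (∑ i, max 0 (max (z (i + 1)) (z (i + 2)))) := by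
  rw [← coe_dotProductBilin_eq_dotp, image_finsetSum]
  exact isLUB_sum fun i _ => isLUB_image_dotp_coordTriangle z i

lemma isGLB_image_dotp_sum_coordTriangle :
    IsGLB (dotp z '' ∑ i, coordTriangle i) (∑ i, min 0 (min (z (i + 1)) (z (i + 2)))) := by
  rw [← coe_dotProductBilin_eq_dotp, image_finsetSum]
  exact isGLB_sum fun i _ => isGLB_image_dotp_coordTriangle z i

lemma tMax_sub_tMin_sum_coordTriangle :
    tMax (∑ i, coordTriangle i) z - tMin (∑ i, coordTriangle i) z =
      ∑ i, |z i| + (∑ i, |z (i + 1) - z (i + 2)|) / 2 := by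
  have hmax := isLUB_image_dotp_sum_coordTriangle z
  have hmin := isGLB_image_dotp_sum_coordTriangle z
  calc tMax (∑ i, coordTriangle i) z - tMin (∑ i, coordTriangle i) z
      = ∑ i, (|z (i + 1)| + |z (i + 2)| + |z (i + 1) - z (i + 2)|) / 2 := by
        rw [tMax, tMin, hmax.csSup_eq hmax.nonempty, hmin.csInf_eq hmin.nonempty,
          ← Finset.sum_sub_distrib]
        simp only [max_zero_sub_min_zero]
    _ = ∑ i, |z i| + (∑ i, |z (i + 1) - z (i + 2)|) / 2 := by
        rw [← Finset.sum_div, Finset.sum_add_distrib, Finset.sum_add_distrib,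
          sum_add_right_eq (|z ·|), sum_add_right_eq (|z ·|)]
        ring

lemma tMax_sub_tMin_sum_coordTriangle_pos {z : Fin 3 → ℝ} (hz : z ≠ 0) :
    0 < tMax (∑ i, coordTriangle i) z - tMin (∑ i, coordTriangle i) z := by
  obtain ⟨i, hi⟩ := Function.ne_iff.1 hz
  rw [tMax_sub_tMin_sum_coordTriangle]
  have : 0 < ∑ i, |z i| :=
    Finset.sum_pos' (fun _ _ => abs_nonneg _) ⟨i, Finset.mem_univ i, abs_pos.2 hi⟩
  positivity

lemma sum_abs_dotp_target_sub_source :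
    ∑ e : HalfCubeEdge, |dotp z e.target - dotp z e.source| =
      4 * ∑ i, |z i| + 2 * ∑ i, |z (i + 1) - z (i + 2)| := by
  calc ∑ e : HalfCubeEdge, |dotp z e.target - dotp z e.source|
      = ∑ i, (2 * |z i| + |z (i + 1)| + |z (i + 2)| + 2 * |z (i + 1) - z (i + 2)|) := by
        rw [Fintype.sum_prod_type]
        congr! 1 with i
        simp [Fin.sum_univ_succ, HalfCubeEdge.source, HalfCubeEdge.target, dotp_rotate]
        grind
    _ = 4 * ∑ i, |z i| + 2 * ∑ i, |z (i + 1) - z (i + 2)| := by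
        simp only [Finset.sum_add_distrib, ← Finset.mul_sum]
        rw [sum_add_right_eq (|z ·|), sum_add_right_eq (|z ·|)]
        ring

end Width

/-- Example 5.3. For the standard basis vectors `f₁, f₂, f₃` of `ℝ³`,
the triangles `T₁ = conv{0,f₂,f₃}`, `T₂ = conv{0,f₁,f₃}`, `T₃ = conv{0,f₁,f₂}` and
`P = T₁ + T₂ + T₃`, one has `A(P,z) = 4` for every nonzero `z`. -/
theorem avgVert_triangleSum_eq_four (f : Fin 3 → (Fin 3 → ℝ))
    (hf : ∀ i, f i = fun j => if j = i then 1 else 0)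
    (P : Set (Fin 3 → ℝ))
    (hP : P = convexHull ℝ {0, f 1, f 2} + convexHull ℝ {0, f 0, f 2} +
      convexHull ℝ {0, f 0, f 1})
    (z : Fin 3 → ℝ) (hz : z ≠ 0) :
    avgVert P z = 4 := by
  have hP' : P = ∑ i, coordTriangle i := by
    have hf' : ∀ i, f i = Pi.single i 1 := fun i => by
      ext j
      simp [hf, Pi.single_apply]
    simp [hP, hf', Fin.sum_univ_three, coordTriangle, pair_comm]
  have hedges : IsEdgeFamily P HalfCubeEdge.source HalfCubeEdge.target := by
    rw [hP', sum_coordTriangle_eq_halfCube]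
    exact HalfCubeEdge.isEdgeFamily
  have hwidth : 0 < tMax P z - tMin P z := hP' ▸ tMax_sub_tMin_sum_coordTriangle_pos hz
  have hlength : ∑ e : HalfCubeEdge, |dotp z e.target - dotp z e.source| =
      4 * (tMax P z - tMin P z) := by
    rw [sum_abs_dotp_target_sub_source, hP', tMax_sub_tMin_sum_coordTriangle]
    ring
  rw [hedges.avgVert_eq (hP' ▸ (isGLB_image_dotp_sum_coordTriangle z).bddBelow)
    (hP' ▸ (isLUB_image_dotp_sum_coordTriangle z).bddAbove), hlength]
  field_simp
end
end

section
/- Let f₁, f₂, f₃ be the standard basis vectors of ℝ³, let T₁ = conv{0, f₂, f₃}, T₂ = conv{0, f₁, f₃}, T₃ = conv{0, f₁, f₂}, and let P = T₁ + T₂ + T₃ (Minkowski sum). Then P is a half-zonotope but P is not a zonotope. -/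
open scoped Pointwise BigOperators

noncomputable section

/-! Half-zonotope: the difference body of a triangle with vertices `0`, `a`, `b` is a translate
of the sum of the segments `[0, a]`, `[0, b]`, `[0, a - b]`, because both bodies are convex
hulls of the seven points `0`, `±a`, `±b`, `±(a - b)`. Summing over the three triangles doubles the
generators along the coordinate axes.

Not a zonotope: a zonotope is centrally symmetric, and a centrally symmetric set with a least
element has a greatest one. Here the origin is the least element, and a greatest element would
dominate every `2fᵢ`, so its coordinate sum would be at least `6`; but the coordinate sum is at most
`1` on each triangle, hence at most `3` on their sum. -/

section DifferenceBody

variable {𝕜 E : Type*} [Field 𝕜] [LinearOrder 𝕜] [IsStrictOrderedRing 𝕜]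
  [AddCommGroup E] [Module 𝕜 E]

lemma convexHull_zero_pair_sub_self (a b : E) :
    convexHull 𝕜 {0, a, b} - convexHull 𝕜 {0, a, b} =
      {-a} + (segment 𝕜 0 a + segment 𝕜 0 b + segment 𝕜 0 (a - b)) := by
  have vertices : ({0, a, b} - {0, a, b} : Set E) = {-a} + ({0, a} + {0, b} + {0, a - b}) := by
    simp only [Set.insert_eq, Set.union_sub, Set.sub_union, Set.union_add, Set.add_union,
      Set.singleton_sub_singleton, Set.singleton_add_singleton]
    ext x
    simp only [Set.mem_union, Set.mem_singleton_iff]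
    abel_nf
    tauto
  rw [← convexHull_sub, vertices]
  simp only [convexHull_add, convexHull_singleton, convexHull_pair]

lemma segment_zero_two_smul (a : E) :
    segment 𝕜 0 ((2 : 𝕜) • a) = segment 𝕜 0 a + segment 𝕜 0 a := by
  have h : (2 : 𝕜) • segment 𝕜 0 a = segment 𝕜 0 ((2 : 𝕜) • a) := by
    simp [← convexHull_pair, ← convexHull_smul, Set.smul_set_insert]
  rw [← h, ← one_add_one_eq_two, (convex_segment 0 a).add_smul zero_le_one zero_le_one, one_smul]

end DifferenceBody

section CentralSymmetry

variable {d : ℕ} {P Q : Set (Fin d → ℝ)}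

lemma centSymm_iff_exists_singleton_sub : CentSymm P ↔ ∃ s, {s} - P = P := by
  simp only [CentSymm, Set.singleton_sub]
  refine ⟨fun ⟨c, h⟩ ↦ ⟨(2 : ℝ) • c, h⟩, fun ⟨s, h⟩ ↦ ⟨(2⁻¹ : ℝ) • s, ?_⟩⟩
  rwa [smul_inv_smul₀ two_ne_zero]

lemma CentSymm.add (hP : CentSymm P) (hQ : CentSymm Q) : CentSymm (P + Q) := by
  rw [centSymm_iff_exists_singleton_sub] at *
  obtain ⟨s, hs⟩ := hP
  obtain ⟨t, ht⟩ := hQ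
  exact ⟨s + t, by rw [← Set.singleton_add_singleton, add_sub_add_comm, hs, ht]⟩

lemma centSymm_singleton (x : Fin d → ℝ) : CentSymm {x} :=
  centSymm_iff_exists_singleton_sub.2 ⟨x + x, by simp⟩

lemma centSymm_segment (x y : Fin d → ℝ) : CentSymm (segment ℝ x y) := by
  refine centSymm_iff_exists_singleton_sub.2 ⟨x + y, ?_⟩
  rw [← convexHull_pair, ← convexHull_singleton (𝕜 := ℝ) (x + y), ← convexHull_sub]
  simp [Set.singleton_sub, Set.image_pair, Set.pair_comm]

lemma centSymm_sum {ι : Type*} {s : Finset ι} {S : ι → Set (Fin d → ℝ)}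
    (h : ∀ i ∈ s, CentSymm (S i)) : CentSymm (∑ i ∈ s, S i) :=
  Finset.sum_induction S CentSymm (fun _ _ ↦ CentSymm.add) (centSymm_singleton 0) h

lemma IsZonotope.centSymm (h : IsZonotope P) : CentSymm P := by
  obtain ⟨n, a, x, -, rfl⟩ := h
  exact (centSymm_singleton x).add (centSymm_sum fun i _ ↦ centSymm_segment 0 (a i))

lemma CentSymm.exists_isGreatest {a : Fin d → ℝ} (hP : CentSymm P) (ha : IsLeast P a) :
    ∃ b, IsGreatest P b := by
  obtain ⟨s, hs⟩ := centSymm_iff_exists_singleton_sub.1 hP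
  have reflect_mem {x : Fin d → ℝ} (hx : x ∈ P) : s - x ∈ P :=
    hs ▸ Set.sub_mem_sub (Set.mem_singleton s) hx
  exact ⟨s - a, reflect_mem ha.1, fun x hx ↦ le_sub_comm.1 (ha.2 (reflect_mem hx))⟩

end CentralSymmetry

lemma pairwiseIndep_of_injective_support {d n : ℕ} {a : Fin n → Fin d → ℝ} (h0 : ∀ i, a i ≠ 0)
    (hinj : Function.Injective fun i ↦ Function.support (a i)) : PairwiseIndep a := by
  refine ⟨h0, fun i j hij c h ↦ hij (hinj ?_)⟩
  have hc : c ≠ 0 := by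
    rintro rfl
    exact h0 j (by rw [h, zero_smul])
  simp only [h, Function.support_const_smul_of_ne_zero c (a i) hc]

section TriangleSum

variable {E : Type*} [AddCommGroup E] [Module ℝ E]

/-- The Minkowski sum `T₁ + T₂ + T₃` of the three triangles spanned by the origin and two of the
vectors `f 0`, `f 1`, `f 2`; as in the paper, `Tᵢ` is the triangle avoiding the `i`-th vector. -/
def triangleSum (f : Fin 3 → E) : Set E :=
  convexHull ℝ {0, f 1, f 2} + convexHull ℝ {0, f 0, f 2} + convexHull ℝ {0, f 0, f 1}

/-- Generators of the difference body of `triangleSum f`. The factor `2` arises because every `f i`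
is a side of two of the triangles. -/
def differenceGenerators (f : Fin 3 → E) : Fin 6 → E :=
  ![(2 : ℝ) • f 0, (2 : ℝ) • f 1, (2 : ℝ) • f 2, f 1 - f 2, f 0 - f 2, f 0 - f 1]

lemma triangleSum_sub_self (f : Fin 3 → E) :
    triangleSum f - triangleSum f =
      {-f 1 + -f 0 + -f 0} + ∑ i, segment ℝ 0 (differenceGenerators f i) := by
  simp only [triangleSum, add_sub_add_comm, convexHull_zero_pair_sub_self, differenceGenerators,
    Fin.sum_univ_six, Matrix.cons_val, segment_zero_two_smul, ← Set.singleton_add_singleton]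
  abel

lemma triangleSum_subset {f : Fin 3 → E} {C : Set E} (hC : Convex ℝ C) (h0 : 0 ∈ C)
    (hf : ∀ i, f i ∈ C) : triangleSum f ⊆ C + C + C := by
  have triangle_subset (i j : Fin 3) : convexHull ℝ {0, f i, f j} ⊆ C :=
    convexHull_min (by simp [Set.insert_subset_iff, h0, hf]) hC
  exact Set.add_subset_add (Set.add_subset_add (triangle_subset 1 2) (triangle_subset 0 2))
    (triangle_subset 0 1)

lemma add_add_mem_triangleSum {f : Fin 3 → E} {x y z : E} (hx : x ∈ ({0, f 1, f 2} : Set E))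
    (hy : y ∈ ({0, f 0, f 2} : Set E)) (hz : z ∈ ({0, f 0, f 1} : Set E)) :
    x + y + z ∈ triangleSum f :=
  Set.add_mem_add (Set.add_mem_add (subset_convexHull ℝ _ hx) (subset_convexHull ℝ _ hy))
    (subset_convexHull ℝ _ hz)

lemma two_smul_mem_triangleSum (f : Fin 3 → E) (i : Fin 3) : (2 : ℝ) • f i ∈ triangleSum f := by
  rw [two_smul]
  fin_cases i
  · simpa using add_add_mem_triangleSum (f := f) (x := 0) (y := f 0) (z := f 0)
      (by simp) (by simp) (by simp)
  · simpa using add_add_mem_triangleSum (f := f) (x := f 1) (y := 0) (z := f 1)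
      (by simp) (by simp) (by simp)
  · simpa using add_add_mem_triangleSum (f := f) (x := f 2) (y := f 2) (z := 0)
      (by simp) (by simp) (by simp)

lemma isLeast_triangleSum_zero [PartialOrder E] [IsOrderedAddMonoid E] [PosSMulMono ℝ E]
    {f : Fin 3 → E} (hf : ∀ i, 0 ≤ f i) : IsLeast (triangleSum f) 0 := by
  constructor
  · simpa using add_add_mem_triangleSum (f := f) (x := 0) (y := 0) (z := 0)
      (by simp) (by simp) (by simp)
  · intro x hx
    obtain ⟨_, ⟨u, hu, v, hv, rfl⟩, w, hw, rfl⟩ :=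
      triangleSum_subset (convex_Ici 0) Set.self_mem_Ici hf hx
    exact add_nonneg (add_nonneg hu hv) hw

lemma map_le_of_mem_triangleSum {f : Fin 3 → E} (ℓ : E →ₗ[ℝ] ℝ) {M : ℝ} (hM : 0 ≤ M)
    (hℓ : ∀ i, ℓ (f i) ≤ M) {x : E} (hx : x ∈ triangleSum f) : ℓ x ≤ 3 * M := by
  obtain ⟨_, ⟨u, hu, v, hv, rfl⟩, w, hw, rfl⟩ :=
    triangleSum_subset (convex_halfSpace_le ℓ.isLinear M) (by simpa using hM) hℓ hx
  calc ℓ (u + v + w) = ℓ u + ℓ v + ℓ w := by simp only [map_add]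
    _ ≤ M + M + M := add_le_add (add_le_add hu hv) hw
    _ = 3 * M := by ring

end TriangleSum

section StandardBasis

lemma pairwiseIndep_differenceGenerators_single :
    PairwiseIndep (differenceGenerators fun i : Fin 3 ↦ Pi.single i (1 : ℝ)) := by
  let S : Fin 6 → Finset (Fin 3) := ![{0}, {1}, {2}, {1, 2}, {0, 2}, {0, 1}]
  have support_eq (i : Fin 6) :
      Function.support (differenceGenerators (fun i : Fin 3 ↦ Pi.single i (1 : ℝ)) i) = S i := by
    ext k
    fin_cases i <;> fin_cases k <;> simp [differenceGenerators, S]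
  have S_nonempty : ∀ i, (S i).Nonempty := by decide
  have S_injective : Function.Injective S := by decide
  refine pairwiseIndep_of_injective_support (fun i ↦ ?_) ?_
  · rw [← Function.support_nonempty_iff, support_eq]
    exact S_nonempty i
  · simpa only [support_eq, Function.comp_def] using Finset.coe_injective.comp S_injective

lemma isZonotope_triangleSum_single_sub_self :
    IsZonotope (triangleSum (fun i : Fin 3 ↦ Pi.single i (1 : ℝ)) -
      triangleSum fun i : Fin 3 ↦ Pi.single i (1 : ℝ)) :=
  ⟨6, _, _, pairwiseIndep_differenceGenerators_single, triangleSum_sub_self _⟩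

lemma not_centSymm_triangleSum_single :
    ¬ CentSymm (triangleSum fun i : Fin 3 ↦ Pi.single i (1 : ℝ)) := by
  intro h
  obtain ⟨b, hb, hmax⟩ := h.exists_isGreatest (isLeast_triangleSum_zero fun i ↦ by simp)
  have two_le (i : Fin 3) : 2 ≤ b i := by
    simpa using hmax (two_smul_mem_triangleSum _ i) i
  have sum_le : ∑ i, b i ≤ 3 := by
    simpa using map_le_of_mem_triangleSum (∑ i, LinearMap.proj i) zero_le_one
      (fun i ↦ by simp) hb
  rw [Fin.sum_univ_three] at sum_le
  linarith [two_le 0, two_le 1, two_le 2]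

end StandardBasis

/-- Example 5.3. For the standard basis vectors `f₁, f₂, f₃` of `ℝ³`,
the triangles `T₁ = conv{0,f₂,f₃}`, `T₂ = conv{0,f₁,f₃}`, `T₃ = conv{0,f₁,f₂}` and
`P = T₁ + T₂ + T₃`, the polytope `P` is a half-zonotope but not a zonotope. -/
theorem triangleSum_halfZonotope_not_zonotope (f : Fin 3 → (Fin 3 → ℝ))
    (hf : ∀ i, f i = fun j => if j = i then 1 else 0)
    (P : Set (Fin 3 → ℝ))
    (hP : P = convexHull ℝ {0, f 1, f 2} + convexHull ℝ {0, f 0, f 2} +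
      convexHull ℝ {0, f 0, f 1}) :
    IsZonotope (P - P) ∧ ¬ IsZonotope P := by
  obtain rfl : f = fun i ↦ Pi.single i 1 := by
    ext i j
    rw [hf, Pi.single_apply]
  subst hP
  exact ⟨isZonotope_triangleSum_single_sub_self,
    fun h ↦ not_centSymm_triangleSum_single h.centSymm⟩
end
end

section
/- Let L ⊂ ℝ³ be a two-dimensional affine plane containing no lattice point, i.e., L ∩ ℤ³ = ∅. For a ∈ ℤ³ let T(a) = L ∩ (a + [0,1]³), and for n ∈ ℕ let N_n = {a ∈ ℤ³ : T(a) ≠ ∅ and T(a) ⊆ [−n, n]³}. Then the average number of vertices of the tiles tends to 4: lim_{n→∞} ( ∑_{a ∈ N_n} (number of extreme points of T(a)) ) / |N_n| = 4. -/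
open scoped Pointwise BigOperators

noncomputable section

/-!
The vertices of a tile are the points where the plane crosses an edge of the corresponding cube,
and every lattice edge belongs to four cubes. Each tile owns exactly one crossed edge: walk from the
lowest to the highest corner of the cube, with respect to an affine functional vanishing on the
plane, using one edge of each direction in a fixed order; the functional increases along the walk,
so it changes sign exactly once. Hence, up to cubes near the boundary of `[-n, n]³`, there are as
many tiles as crossed edges, while each crossed edge is counted as a vertex four times. The boundary
error is `O(n)` and the number of tiles is at least `c n²`. In `ℝ^(d+1)` every edge lies in `2^d`
cubes, and the same argument gives the average `2^d`.
-/

lemma exists_affineMap_eq_zero_iff_mem {k V P : Type*} [Field k] [AddCommGroup V] [Module k V]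
    [FiniteDimensional k V] [AddTorsor V P] (L : AffineSubspace k P)
    (hne : (L : Set P).Nonempty)
    (hdim : Module.finrank k L.direction + 1 = Module.finrank k V) :
    ∃ f : P →ᵃ[k] k, f.linear ≠ 0 ∧ ∀ x, f x = 0 ↔ x ∈ L := by
  obtain ⟨x₀, hx₀⟩ := hne
  have hlt : L.direction < ⊤ := Submodule.lt_top_of_finrank_lt_finrank (by omega)
  obtain ⟨φ, hφ, hle⟩ := Submodule.exists_le_ker_of_lt_top _ hlt
  have hker : L.direction = LinearMap.ker φ := by
    apply Submodule.eq_of_le_of_finrank_le hle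
    have := Module.Dual.finrank_ker_add_one_of_ne_zero hφ
    omega
  refine ⟨φ.toAffineMap.comp (AffineEquiv.vaddConst k x₀).symm.toAffineMap, hφ, fun x => ?_⟩
  rw [← AffineSubspace.vsub_right_mem_direction_iff_mem hx₀, hker, LinearMap.mem_ker]
  rfl

lemma nonempty_of_finrank_direction_pos {k V P : Type*} [DivisionRing k] [AddCommGroup V]
    [Module k V] [AddTorsor V P] {L : AffineSubspace k P}
    (hL : 0 < Module.finrank k L.direction) : (L : Set P).Nonempty := by
  rw [Set.nonempty_iff_ne_empty, Ne, AffineSubspace.coe_eq_bot_iff]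
  rintro rfl
  rw [AffineSubspace.direction_bot, finrank_bot] at hL
  exact hL.false

lemma eq_zero_of_add_sub_mem_of_mem_extremePoints {E : Type*} [AddCommGroup E] [Module ℝ E]
    {A : Set E} {x v : E} (hx : x ∈ A.extremePoints ℝ) (hadd : x + v ∈ A) (hsub : x - v ∈ A) :
    v = 0 := by
  refine add_eq_left.1 (hx.2 hadd hsub ⟨1 / 2, 1 / 2, by norm_num, by norm_num, by norm_num, ?_⟩)
  module

lemma zero_mem_openSegment_iff {α β : ℝ} (hα : α ≠ 0) :
    (0 : ℝ) ∈ openSegment ℝ α β ↔ α * β < 0 := by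
  rcases eq_or_ne α β with rfl | hαβ
  · simp [hα.symm, mul_self_nonneg]
  · rw [openSegment_eq_Ioo' hαβ, Set.mem_Ioo, min_lt_iff, lt_max_iff, mul_neg_iff]
    grind

lemma card_fin_mul_neg_of_monotone {g : ℕ → ℝ} (hg : Monotone g) (h0 : ∀ k, g k ≠ 0) (n : ℕ) :
    Finset.card {k : Fin n | g k * g (k + 1) < 0} = if g 0 < 0 ∧ 0 < g n then 1 else 0 := by
  induction n with
  | zero => simpa using fun h : g 0 < 0 => h.le
  | succ n ih =>
    rw [Finset.card_filter] at ih ⊢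
    rw [Fin.sum_univ_castSucc]
    simp only [Fin.val_castSucc, Fin.val_last, ih, mul_neg_iff (a := g n)]
    have h1 := hg (Nat.zero_le n)
    have h2 := hg n.le_succ
    grind

lemma tendsto_div_of_sub_isLittleO {α : Type*} {l : Filter α} {u v : α → ℝ} {c : ℝ}
    (h : (fun x => u x - c * v x) =o[l] v) (hv : ∀ᶠ x in l, v x ≠ 0) :
    Filter.Tendsto (fun x => u x / v x) l (nhds c) := by
  rw [← tendsto_sub_nhds_zero_iff]
  refine h.tendsto_div_nhds_zero.congr' ?_
  filter_upwards [hv] with x hx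
  field_simp

section AffineFunctional

variable {ι : Type*} [DecidableEq ι] (f : (ι → ℝ) →ᵃ[ℝ] ℝ)

/-- The slope of an affine functional on `ℝ^ι` in the `i`-th coordinate direction. -/
def coordSlope (i : ι) : ℝ := f.linear (Pi.single i 1)

variable {f}

lemma map_add_smul_single (x : ι → ℝ) (t : ℝ) (i : ι) :
    f (x + t • Pi.single i 1) = f x + t * coordSlope f i := by
  rw [add_comm x, ← vadd_eq_add, f.map_vadd, map_smul, vadd_eq_add, smul_eq_mul, coordSlope,
    add_comm]

lemma map_sub_map_eq_sum [Fintype ι] (x y : ι → ℝ) :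
    f x - f y = ∑ i, (x i - y i) * coordSlope f i := by
  rw [← vsub_eq_sub, ← f.linearMap_vsub, LinearMap.pi_apply_eq_sum_univ]
  simp [coordSlope, ← Pi.single_apply, Pi.single_comm]

lemma abs_map_le [Fintype ι] {x : ι → ℝ} {M : ℝ} (hx : ∀ i, |x i| ≤ M) :
    |f x| ≤ |f 0| + M * ∑ i, |coordSlope f i| := by
  have hsum : |f x - f 0| ≤ M * ∑ i, |coordSlope f i| := by
    rw [map_sub_map_eq_sum, Finset.mul_sum]
    refine (Finset.abs_sum_le_sum_abs _ _).trans (Finset.sum_le_sum fun i _ => ?_)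
    rw [Pi.zero_apply, sub_zero, abs_mul]
    exact mul_le_mul_of_nonneg_right (hx i) (abs_nonneg _)
  linarith [abs_sub_abs_le_abs_sub (f x) (f 0)]

lemma exists_coordSlope_ne_zero [Finite ι] (hf : f.linear ≠ 0) : ∃ i, coordSlope f i ≠ 0 := by
  contrapose! hf
  exact LinearMap.pi_ext' fun i => LinearMap.ext_ring (hf i)

lemma map_insertNth {d : ℕ} {f : (Fin (d + 1) → ℝ) →ᵃ[ℝ] ℝ} (i : Fin (d + 1)) (t : ℝ)
    (y : Fin d → ℝ) : f (i.insertNth t y) = f (i.insertNth 0 y) + t * coordSlope f i := by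
  rw [← map_add_smul_single]
  congr 1
  simp [funext_iff, i.forall_iff_succAbove]

end AffineFunctional

/-- The inclusion of the lattice `ℤ^ι` in `ℝ^ι`. -/
def latticePoint {ι : Type*} : (ι → ℤ) →+ (ι → ℝ) := (Int.castAddHom ℝ).compLeft ι

@[simp]
lemma latticePoint_apply {ι : Type*} (a : ι → ℤ) (i : ι) : latticePoint a i = a i := rfl

@[simp]
lemma latticePoint_single_one {ι : Type*} [DecidableEq ι] (i : ι) :
    latticePoint (Pi.single i 1) = Pi.single i 1 := by
  ext j
  rcases eq_or_ne j i with rfl | h <;> simp [*]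

/-- The relatively open edge of the cubical lattice that leaves `p` in direction `i`. -/
def openEdge {ι : Type*} [DecidableEq ι] (i : ι) (p : ι → ℤ) : Set (ι → ℝ) :=
  openSegment ℝ (latticePoint p) (latticePoint (p + Pi.single i 1))

/-- The zero set of `f` crosses the edge that leaves `p` in direction `i`: the signs of `f` at the
two endpoints are opposite. -/
def Crosses {ι : Type*} [DecidableEq ι] (f : (ι → ℝ) →ᵃ[ℝ] ℝ) (i : ι) (p : ι → ℤ) : Prop :=
  f (latticePoint p) * f (latticePoint (p + Pi.single i 1)) < 0

/-- The tile cut out by the zero set of `f` from the unit cube with lowest corner `a`. -/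
def tile {ι : Type*} (f : (ι → ℝ) →ᵃ[ℝ] ℝ) (a : ι → ℤ) : Set (ι → ℝ) :=
  {x | f x = 0 ∧ ∀ i, x i ∈ Set.Icc (a i : ℝ) (a i + 1)}

section Crossing

variable {d : ℕ} {f : (Fin (d + 1) → ℝ) →ᵃ[ℝ] ℝ} {i : Fin (d + 1)} {p q : Fin (d + 1) → ℤ}
  {x y : Fin (d + 1) → ℝ}

lemma mem_openEdge_iff :
    x ∈ openEdge i p ↔
      x i ∈ Set.Ioo (p i : ℝ) (p i + 1) ∧
        ∀ j, x (i.succAbove j) = p (i.succAbove j) := by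
  rw [openEdge, map_add, latticePoint_single_one, openSegment_eq_image', Set.mem_image]
  constructor
  · rintro ⟨t, ht, rfl⟩
    simpa using ht
  · rintro ⟨⟨h0, h1⟩, h⟩
    refine ⟨x i - p i, ⟨by linarith, by linarith⟩, ?_⟩
    simp [funext_iff, i.forall_iff_succAbove, h]

lemma floor_eq_of_mem_openEdge (hx : x ∈ openEdge i p) (j : Fin (d + 1)) : ⌊x j⌋ = p j := by
  obtain ⟨⟨h0, h1⟩, h⟩ := mem_openEdge_iff.1 hx
  cases j using i.succAboveCases with
  | x => exact Int.floor_eq_iff.2 ⟨h0.le, h1⟩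
  | p j => rw [h, Int.floor_intCast]

lemma openEdge_unique {i' : Fin (d + 1)} (hp : x ∈ openEdge i p) (hq : x ∈ openEdge i' q) :
    i = i' ∧ p = q := by
  have hpq : p = q :=
    funext fun j => (floor_eq_of_mem_openEdge hp j).symm.trans (floor_eq_of_mem_openEdge hq j)
  refine ⟨?_, hpq⟩
  subst hpq
  by_contra hne
  obtain ⟨j, rfl⟩ := Fin.exists_succAbove_eq hne
  exact (mem_openEdge_iff.1 hp).1.1.ne' ((mem_openEdge_iff.1 hq).2 j)

lemma eq_of_map_eq_of_removeNth_eq (hi : coordSlope f i ≠ 0) (hf : f x = f y)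
    (h : i.removeNth x = i.removeNth y) : x = y := by
  have hxy : x i = y i := by
    rw [← i.insertNth_self_removeNth x, ← i.insertNth_self_removeNth y, map_insertNth,
      map_insertNth _ (y i), h, add_right_inj] at hf
    exact mul_right_cancel₀ hi hf
  rw [← i.insertNth_self_removeNth x, ← i.insertNth_self_removeNth y, h, hxy]

lemma Crosses.coordSlope_ne_zero (h : Crosses f i p) : coordSlope f i ≠ 0 := by
  intro h0
  rw [Crosses, map_add, latticePoint_single_one, ← one_smul ℝ (Pi.single i 1),
    map_add_smul_single, h0, mul_zero, add_zero] at h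
  exact h.not_ge (mul_self_nonneg _)

lemma crosses_iff_exists_mem_openEdge (hp : f (latticePoint p) ≠ 0) :
    Crosses f i p ↔ ∃ x ∈ openEdge i p, f x = 0 := by
  rw [Crosses, ← zero_mem_openSegment_iff hp, ← image_openSegment]
  rfl

lemma Crosses.exists_mem_openEdge (h : Crosses f i p) : ∃ x ∈ openEdge i p, f x = 0 :=
  (crosses_iff_exists_mem_openEdge (left_ne_zero_of_mul h.ne)).1 h

lemma Crosses.eq_of_mem_openEdge (h : Crosses f i p) (hx : x ∈ openEdge i p) (hy : y ∈ openEdge i p)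
    (hfx : f x = 0) (hfy : f y = 0) : x = y := by
  refine eq_of_map_eq_of_removeNth_eq h.coordSlope_ne_zero (hfx.trans hfy.symm) (funext fun j => ?_)
  exact ((mem_openEdge_iff.1 hx).2 j).trans ((mem_openEdge_iff.1 hy).2 j).symm

/-- A line parallel to a coordinate axis meets the zero set of `f` in at most one point. -/
lemma Crosses.eq_of_removeNth_eq (hp : Crosses f i p) (hq : Crosses f i q)
    (h : i.removeNth p = i.removeNth q) : p = q := by
  obtain ⟨x, hxp, hfx⟩ := hp.exists_mem_openEdge
  obtain ⟨y, hyq, hfy⟩ := hq.exists_mem_openEdge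
  obtain rfl : x = y := by
    refine eq_of_map_eq_of_removeNth_eq hp.coordSlope_ne_zero (hfx.trans hfy.symm)
      (funext fun j => ?_)
    have hj : p (i.succAbove j) = q (i.succAbove j) := congrFun h j
    exact ((mem_openEdge_iff.1 hxp).2 j).trans (hj ▸ ((mem_openEdge_iff.1 hyq).2 j).symm)
  exact (openEdge_unique hxp hyq).2

end Crossing

section ExtremePoints

lemma eq_zero_of_mem_extremePoints_tile {ι : Type*} [Finite ι] {f : (ι → ℝ) →ᵃ[ℝ] ℝ}
    {a : ι → ℤ} {x v : ι → ℝ} (hx : x ∈ (tile f a).extremePoints ℝ) (hv : f.linear v = 0)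
    (hsupp : ∀ k, v k ≠ 0 → x k ∈ Set.Ioo (a k : ℝ) (a k + 1)) : v = 0 := by
  have hmem : ∀ᶠ t : ℝ in nhds 0, x + t • v ∈ tile f a := by
    refine .and (.of_forall fun t => ?_) (Filter.eventually_all.2 fun k => ?_)
    · rw [add_comm, ← vadd_eq_add, f.map_vadd, map_smul, hv, hx.1.1, smul_zero, vadd_eq_add,
        add_zero]
    · rcases eq_or_ne (v k) 0 with hk | hk
      · exact .of_forall fun t => by simpa [hk] using hx.1.2 k
      · have hcont : ContinuousAt (fun t : ℝ => (x + t • v) k) 0 := by fun_prop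
        exact hcont.eventually_mem (Icc_mem_nhds (by simpa using (hsupp k hk).1)
          (by simpa using (hsupp k hk).2))
  have hmem' : ∀ᶠ t : ℝ in nhds 0, x - t • v ∈ tile f a := by
    simpa [sub_eq_add_neg] using (continuous_neg.tendsto' (0 : ℝ) 0 neg_zero).eventually hmem
  obtain ⟨t, ⟨hadd, hsub⟩, ht⟩ :=
    ((hmem.and hmem').filter_mono nhdsWithin_le_nhds |>.and self_mem_nhdsWithin :
      ∀ᶠ t : ℝ in nhdsWithin 0 {0}ᶜ, _).exists
  exact (smul_eq_zero_iff_right ht).1 (eq_zero_of_add_sub_mem_of_mem_extremePoints hx hadd hsub)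

/-- Two free coordinates `i ≠ j` would leave a direction of the `ij`-plane along which `f` is
constant. -/
lemma eq_of_mem_Ioo_of_mem_extremePoints_tile {ι : Type*} [Finite ι] {f : (ι → ℝ) →ᵃ[ℝ] ℝ}
    {a : ι → ℤ} {x : ι → ℝ} {i j : ι} (hx : x ∈ (tile f a).extremePoints ℝ)
    (hi : x i ∈ Set.Ioo (a i : ℝ) (a i + 1)) (hj : x j ∈ Set.Ioo (a j : ℝ) (a j + 1)) :
    i = j := by
  classical
  by_contra hij
  obtain ⟨α, β, hαβ, hv⟩ : ∃ α β : ℝ, (α ≠ 0 ∨ β ≠ 0) ∧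
      α * coordSlope f i + β * coordSlope f j = 0 := by
    by_cases hs : coordSlope f i = 0
    · exact ⟨1, 0, by simp [hs]⟩
    · exact ⟨coordSlope f j, -coordSlope f i, by simp [hs], by ring⟩
  have hzero : α • Pi.single i 1 + β • Pi.single j 1 = (0 : ι → ℝ) := by
    refine eq_zero_of_mem_extremePoints_tile hx (by simpa [coordSlope] using hv) fun k hk => ?_
    rcases eq_or_ne k i with rfl | hki
    · exact hi
    rcases eq_or_ne k j with rfl | hkj
    · exact hj
    simp [hki, hkj] at hk
  have hα : α = 0 := by simpa [hij] using congrFun hzero i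
  have hβ : β = 0 := by simpa [Ne.symm hij] using congrFun hzero j
  exact hαβ.elim (· hα) (· hβ)

variable {d : ℕ} {f : (Fin (d + 1) → ℝ) →ᵃ[ℝ] ℝ} {i : Fin (d + 1)} {a : Fin (d + 1) → ℤ}
  {x : Fin (d + 1) → ℝ} {ε : Fin d → ℤ}

lemma mem_openEdge_add_insertNth_iff :
    x ∈ openEdge i (a + i.insertNth 0 ε) ↔
      x i ∈ Set.Ioo (a i : ℝ) (a i + 1) ∧
        ∀ j, x (i.succAbove j) = a (i.succAbove j) + ε j := by
  simp [mem_openEdge_iff]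

lemma mem_tile_of_mem_openEdge (hε : ε ∈ Finset.Icc 0 1)
    (hx : x ∈ openEdge i (a + i.insertNth 0 ε)) (hfx : f x = 0) : x ∈ tile f a := by
  rw [mem_openEdge_add_insertNth_iff] at hx
  rw [Finset.mem_Icc] at hε
  refine ⟨hfx, i.forall_iff_succAbove.2 ⟨Set.Ioo_subset_Icc_self hx.1, fun j => ?_⟩⟩
  have h0 : (0 : ℝ) ≤ ε j := by exact_mod_cast hε.1 j
  have h1 : (ε j : ℝ) ≤ 1 := by exact_mod_cast hε.2 j
  rw [hx.2, Set.mem_Icc]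
  exact ⟨by linarith, by linarith⟩

/-- The coordinates fixed along an edge sit at endpoints of their intervals, so they are constant
on every segment of the tile through the crossing point. -/
lemma mem_extremePoints_tile_of_mem_openEdge (hi : coordSlope f i ≠ 0)
    (hε : ε ∈ Finset.Icc 0 1) (hx : x ∈ openEdge i (a + i.insertNth 0 ε)) (hfx : f x = 0) :
    x ∈ (tile f a).extremePoints ℝ := by
  refine mem_extremePoints_iff_left.2
    ⟨mem_tile_of_mem_openEdge hε hx hfx, fun y hy w hw hyw => ?_⟩
  refine eq_of_map_eq_of_removeNth_eq hi (hy.1.trans hfx.symm) (funext fun j => ?_)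
  have hcorner : x (i.succAbove j) ∈
      (Set.Icc (a (i.succAbove j) : ℝ) (a (i.succAbove j) + 1)).extremePoints ℝ := by
    rw [Set.extremePoints_Icc (by linarith), (mem_openEdge_add_insertNth_iff.1 hx).2]
    have hεj : ε j = 0 ∨ ε j = 1 := by
      have h0 : 0 ≤ ε j := (Finset.mem_Icc.1 hε).1 j
      have h1 : ε j ≤ 1 := (Finset.mem_Icc.1 hε).2 j
      omega
    rcases hεj with h | h <;> simp [h]
  exact (mem_extremePoints_iff_left.1 hcorner).2 _ (hy.2 _) _ (hw.2 _)
    (Pi.openSegment_subset (s := Set.univ) y w hyw (i.succAbove j) trivial)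

lemma exists_mem_Ioo_of_mem_tile (h0 : ∀ p, f (latticePoint p) ≠ 0) (hx : x ∈ tile f a) :
    ∃ i, x i ∈ Set.Ioo (a i : ℝ) (a i + 1) := by
  by_contra! hnot
  have hlattice : ∀ i, ∃ m : ℤ, (m : ℝ) = x i := fun i => by
    rcases Set.eq_endpoints_or_mem_Ioo_of_mem_Icc (hx.2 i) with h | h | h
    · exact ⟨a i, h.symm⟩
    · exact ⟨a i + 1, by simp [h]⟩
    · exact absurd h (hnot i)
  choose p hp using hlattice
  exact h0 p ((congrArg f (funext hp)).trans hx.1)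

lemma mem_extremePoints_tile_iff (h0 : ∀ p, f (latticePoint p) ≠ 0) :
    x ∈ (tile f a).extremePoints ℝ ↔
      f x = 0 ∧ ∃ i, ∃ ε ∈ Finset.Icc (0 : Fin d → ℤ) 1, x ∈ openEdge i (a + i.insertNth 0 ε) := by
  constructor
  · intro hx
    obtain ⟨i, hi⟩ := exists_mem_Ioo_of_mem_tile h0 hx.1
    have hlattice : ∀ j, ∃ m : ℤ, (0 ≤ m ∧ m ≤ 1) ∧ x (i.succAbove j) = a (i.succAbove j) + m :=
      fun j => by
        rcases Set.eq_endpoints_or_mem_Ioo_of_mem_Icc (hx.1.2 (i.succAbove j)) with h | h | h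
        · exact ⟨0, by simp [h]⟩
        · exact ⟨1, by simp [h]⟩
        · exact absurd (eq_of_mem_Ioo_of_mem_extremePoints_tile hx h hi) (i.succAbove_ne j)
    choose ε hε hxε using hlattice
    exact ⟨hx.1.1, i, ε, Finset.mem_Icc.2 ⟨fun j => (hε j).1, fun j => (hε j).2⟩,
      mem_openEdge_add_insertNth_iff.2 ⟨hi, hxε⟩⟩
  · rintro ⟨hfx, i, ε, hε, hx⟩
    have hcross := (crosses_iff_exists_mem_openEdge (h0 _)).2 ⟨x, hx, hfx⟩
    exact mem_extremePoints_tile_of_mem_openEdge hcross.coordSlope_ne_zero hε hx hfx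

open scoped Classical in
lemma nVert_tile (h0 : ∀ p, f (latticePoint p) ≠ 0) (a : Fin (d + 1) → ℤ) :
    nVert (tile f a) =
      ∑ i, Finset.card {ε ∈ Finset.Icc (0 : Fin d → ℤ) 1 | Crosses f i (a + i.insertNth 0 ε)} := by
  let crossed : Finset ((_ : Fin (d + 1)) × (Fin d → ℤ)) := Finset.univ.sigma fun i =>
    {ε ∈ Finset.Icc (0 : Fin d → ℤ) 1 | Crosses f i (a + i.insertNth 0 ε)}
  have hcrossed : ∀ i ε, ⟨i, ε⟩ ∈ crossed ↔
      ε ∈ Finset.Icc 0 1 ∧ Crosses f i (a + i.insertNth 0 ε) := fun i ε => by simp [crossed]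
  have hpoint : ∀ i ε, ⟨i, ε⟩ ∈ crossed →
      ∃ x ∈ openEdge i (a + i.insertNth 0 ε), f x = 0 :=
    fun i ε h => ((hcrossed i ε).1 h).2.exists_mem_openEdge
  choose v hv hfv using hpoint
  have hcard : (crossed : Set ((_ : Fin (d + 1)) × (Fin d → ℤ))).ncard = nVert (tile f a) := by
    refine Set.ncard_congr (fun e he => v e.1 e.2 he) (fun e he => ?_) ?_ (fun x hx => ?_)
    · exact (mem_extremePoints_tile_iff h0).2
        ⟨hfv _ _ he, e.1, e.2, ((hcrossed _ _).1 he).1, hv _ _ he⟩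
    · rintro ⟨i, ε⟩ ⟨i', ε'⟩ he he' heq
      obtain ⟨rfl, hε⟩ := openEdge_unique (hv i ε he) (heq ▸ hv i' ε' he')
      rw [Fin.insertNth_right_injective _ (add_left_cancel hε)]
    · obtain ⟨hfx, i, ε, hε, hxe⟩ := (mem_extremePoints_tile_iff h0).1 hx
      have hcross := (crosses_iff_exists_mem_openEdge (h0 _)).2 ⟨x, hxe, hfx⟩
      have he := (hcrossed i ε).2 ⟨hε, hcross⟩
      exact ⟨⟨i, ε⟩, he, hcross.eq_of_mem_openEdge (hv i ε he) hxe (hfv i ε he) hfx⟩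
  rw [← hcard, Set.ncard_coe_finset, Finset.card_sigma]

end ExtremePoints

section CornerPath

/-- The walk along the corners of the unit cube that starts where `f` is smallest and flips the
coordinates one after another: `k` is the number of coordinates flipped so far. -/
def cornerPath {n : ℕ} (f : (Fin n → ℝ) →ᵃ[ℝ] ℝ) (k : ℕ) : Fin n → ℤ :=
  fun j => if (j : ℕ) < k ↔ coordSlope f j < 0 then 0 else 1

variable {n : ℕ} {f : (Fin n → ℝ) →ᵃ[ℝ] ℝ} {a : Fin n → ℤ} {x : Fin n → ℝ}

lemma cornerPath_mem_Icc (f : (Fin n → ℝ) →ᵃ[ℝ] ℝ) (k : ℕ) : cornerPath f k ∈ Set.Icc 0 1 := by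
  refine ⟨fun j => ?_, fun j => ?_⟩ <;>
  · unfold cornerPath
    split_ifs <;> simp

lemma cornerPath_add_single_of_nonneg {i : Fin n} (hi : 0 ≤ coordSlope f i) :
    cornerPath f i + Pi.single i 1 = cornerPath f (i + 1) := by
  ext j
  rcases eq_or_ne j i with rfl | hj
  · simp [cornerPath, hi]
  · simp [cornerPath, hj, hj.le_iff_lt]

lemma cornerPath_add_single_of_neg {i : Fin n} (hi : coordSlope f i < 0) :
    cornerPath f (i + 1) + Pi.single i 1 = cornerPath f i := by
  ext j
  rcases eq_or_ne j i with rfl | hj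
  · simp [cornerPath, hi]
  · simp [cornerPath, hj, hj.le_iff_lt]

lemma map_latticePoint_add_single (p : Fin n → ℤ) (i : Fin n) :
    f (latticePoint (p + Pi.single i 1)) = f (latticePoint p) + coordSlope f i := by
  simpa using map_add_smul_single (f := f) (latticePoint p) 1 i

lemma monotone_map_cornerPath (f : (Fin n → ℝ) →ᵃ[ℝ] ℝ) (a : Fin n → ℤ) :
    Monotone fun k => f (latticePoint (a + cornerPath f k)) := by
  refine monotone_nat_of_le_succ fun k => ?_
  rcases lt_or_ge k n with hk | hk
  · rcases lt_or_ge (coordSlope f ⟨k, hk⟩) 0 with hs | hs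
    · rw [← cornerPath_add_single_of_neg hs, ← add_assoc, map_latticePoint_add_single]
      exact add_le_of_nonpos_right hs.le
    · rw [← cornerPath_add_single_of_nonneg hs, ← add_assoc, map_latticePoint_add_single]
      exact le_add_of_nonneg_right hs
  · have hconst : cornerPath f (k + 1) = cornerPath f k := by
      ext j
      simp [cornerPath, j.2.trans_le hk, (j.2.trans_le hk).trans k.lt_succ_self]
    rw [hconst]

lemma map_cornerPath_zero_le (hx : ∀ i, x i ∈ Set.Icc (a i : ℝ) (a i + 1)) :
    f (latticePoint (a + cornerPath f 0)) ≤ f x := by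
  rw [← sub_nonneg, map_sub_map_eq_sum]
  refine Finset.sum_nonneg fun i _ => ?_
  obtain ⟨h0, h1⟩ := hx i
  rcases lt_or_ge (coordSlope f i) 0 with hs | hs
  · exact mul_nonneg_of_nonpos_of_nonpos (by simpa [cornerPath, hs] using h1) hs.le
  · exact mul_nonneg (by simpa [cornerPath, hs.not_gt] using h0) hs

lemma le_map_cornerPath_self (hx : ∀ i, x i ∈ Set.Icc (a i : ℝ) (a i + 1)) :
    f x ≤ f (latticePoint (a + cornerPath f n)) := by
  rw [← sub_nonneg, map_sub_map_eq_sum]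
  refine Finset.sum_nonneg fun i _ => ?_
  obtain ⟨h0, h1⟩ := hx i
  rcases lt_or_ge (coordSlope f i) 0 with hs | hs
  · exact mul_nonneg_of_nonpos_of_nonpos (by simpa [cornerPath, hs] using h0) hs.le
  · exact mul_nonneg (by simpa [cornerPath, hs.not_gt] using h1) hs

lemma exists_mem_tile_forall_mem_Ioo (hneg : f (latticePoint (a + cornerPath f 0)) < 0)
    (hpos : 0 < f (latticePoint (a + cornerPath f n))) :
    ∃ x ∈ tile f a, ∀ i, x i ∈ Set.Ioo (a i : ℝ) (a i + 1) := by
  obtain ⟨x, hx, hfx⟩ : (0 : ℝ) ∈ f '' openSegment ℝ (latticePoint (a + cornerPath f 0))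
      (latticePoint (a + cornerPath f n)) := by
    rw [image_openSegment, zero_mem_openSegment_iff hneg.ne]
    exact mul_neg_of_neg_of_pos hneg hpos
  have hIoo : ∀ i, x i ∈ Set.Ioo (a i : ℝ) (a i + 1) := fun i => by
    have hxi := Pi.openSegment_subset (s := Set.univ) _ _ hx i trivial
    rw [← openSegment_eq_Ioo (by linarith)]
    rcases lt_or_ge (coordSlope f i) 0 with hs | hs
    · simpa [cornerPath, hs, openSegment_symm] using hxi
    · simpa [cornerPath, hs.not_gt] using hxi
  exact ⟨x, ⟨hfx, fun i => Set.Ioo_subset_Icc_self (hIoo i)⟩, hIoo⟩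

lemma tile_nonempty_iff (h0 : ∀ p, f (latticePoint p) ≠ 0) :
    (tile f a).Nonempty ↔
      f (latticePoint (a + cornerPath f 0)) < 0 ∧ 0 < f (latticePoint (a + cornerPath f n)) := by
  constructor
  · rintro ⟨x, hfx, hx⟩
    exact ⟨(map_cornerPath_zero_le hx).trans_eq hfx |>.lt_of_ne (h0 _),
      hfx.symm.trans_le (le_map_cornerPath_self hx) |>.lt_of_ne' (h0 _)⟩
  · rintro ⟨hneg, hpos⟩
    obtain ⟨x, hx, -⟩ := exists_mem_tile_forall_mem_Ioo hneg hpos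
    exact ⟨x, hx⟩

end CornerPath

section PathEdge

variable {d : ℕ} {f : (Fin (d + 1) → ℝ) →ᵃ[ℝ] ℝ}

/-- The position, among the edges of the unit cube in direction `i`, of the edge used by
`cornerPath f`. -/
def pathEdge (f : (Fin (d + 1) → ℝ) →ᵃ[ℝ] ℝ) (i : Fin (d + 1)) : Fin d → ℤ :=
  i.removeNth (cornerPath f i)

lemma pathEdge_mem_Icc (i : Fin (d + 1)) : pathEdge f i ∈ Finset.Icc 0 1 :=
  Finset.mem_Icc.2 ⟨fun _ => (cornerPath_mem_Icc f i).1 _, fun _ => (cornerPath_mem_Icc f i).2 _⟩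

lemma crosses_pathEdge_iff (a : Fin (d + 1) → ℤ) (i : Fin (d + 1)) :
    Crosses f i (a + i.insertNth 0 (pathEdge f i)) ↔
      f (latticePoint (a + cornerPath f i)) * f (latticePoint (a + cornerPath f (i + 1))) < 0 := by
  rcases lt_or_ge (coordSlope f i) 0 with hs | hs
  · have hbase : i.insertNth 0 (pathEdge f i) = cornerPath f (i + 1) := by
      rw [Fin.insertNth_eq_iff, pathEdge, ← cornerPath_add_single_of_neg hs]
      exact ⟨by simp [cornerPath, hs], by ext j; simp [Fin.removeNth]⟩
    rw [Crosses, hbase, add_assoc, cornerPath_add_single_of_neg hs, mul_comm]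
  · have hbase : i.insertNth 0 (pathEdge f i) = cornerPath f i := by
      rw [Fin.insertNth_eq_iff]
      exact ⟨by simp [cornerPath, hs], rfl⟩
    rw [Crosses, hbase, add_assoc, cornerPath_add_single_of_nonneg hs]

/-- `f` increases along `cornerPath f`, hence changes sign at most once. -/
lemma card_crosses_pathEdge (h0 : ∀ p, f (latticePoint p) ≠ 0) (a : Fin (d + 1) → ℤ) :
    open scoped Classical in
    Finset.card {i | Crosses f i (a + i.insertNth 0 (pathEdge f i))} =
      if (tile f a).Nonempty then 1 else 0 := by
  simp only [crosses_pathEdge_iff, tile_nonempty_iff h0]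
  convert card_fin_mul_neg_of_monotone (monotone_map_cornerPath f a) (fun _ => h0 _) (d + 1)

end PathEdge

section Counting

/-- The lowest corners of the lattice cubes contained in `[-n, n]^d`. -/
def latticeBox (d n : ℕ) : Finset (Fin d → ℤ) := Fintype.piFinset fun _ => Finset.Ico (-n : ℤ) n

lemma mem_latticeBox_iff {d n : ℕ} {a : Fin d → ℤ} :
    a ∈ latticeBox d n ↔ ∀ i, -(n : ℤ) ≤ a i ∧ a i < n := by
  simp [latticeBox]

lemma card_latticeBox (d n : ℕ) : (latticeBox d n).card = (2 * n) ^ d := by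
  have h : (n - -n : ℤ).toNat = 2 * n := by omega
  rw [latticeBox, Fintype.card_piFinset_const, Int.card_Ico, h]

lemma latticeBox_mono (d : ℕ) : Monotone (latticeBox d) := fun m n hmn =>
  Fintype.piFinset_subset _ _ fun _ => Finset.Ico_subset_Ico (by omega) (by omega)

open scoped Classical in
/-- The lowest corners of the cubes in `[-n, n]^d` that meet the zero set of `f`. -/
def meetingCubes {d : ℕ} (f : (Fin d → ℝ) →ᵃ[ℝ] ℝ) (n : ℕ) : Finset (Fin d → ℤ) :=
  {a ∈ latticeBox d n | (tile f a).Nonempty}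

open scoped Classical in
/-- The number of cubes in `[-n, n]^(d+1)` whose edge in direction `i` at position `ε ∈ {0, 1}^d`
is crossed by the zero set of `f`. -/
def crossingCount {d : ℕ} (f : (Fin (d + 1) → ℝ) →ᵃ[ℝ] ℝ) (i : Fin (d + 1)) (n : ℕ)
    (ε : Fin d → ℤ) : ℕ :=
  Finset.card {a ∈ latticeBox (d + 1) n | Crosses f i (a + i.insertNth 0 ε)}

/-- A nonempty tile reaches the interior of its cube, which rules out cubes touching `[-n, n]^d`
only from the outside. -/
lemma mem_meetingCubes_iff {d n : ℕ} {f : (Fin d → ℝ) →ᵃ[ℝ] ℝ} {a : Fin d → ℤ}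
    (h0 : ∀ p, f (latticePoint p) ≠ 0) :
    a ∈ meetingCubes f n ↔ (tile f a).Nonempty ∧ tile f a ⊆ {x | ∀ i, |x i| ≤ n} := by
  classical
  rw [meetingCubes, Finset.mem_filter, mem_latticeBox_iff, and_comm, and_congr_right_iff]
  intro hne
  constructor
  · intro ha x hx i
    have hlow : (-n : ℝ) ≤ a i := by exact_mod_cast (ha i).1
    have hupp : (a i : ℝ) + 1 ≤ n := by exact_mod_cast (ha i).2
    exact abs_le.2 ⟨hlow.trans (hx.2 i).1, (hx.2 i).2.trans hupp⟩
  · intro hsub i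
    obtain ⟨hneg, hpos⟩ := (tile_nonempty_iff h0).1 hne
    obtain ⟨x, hx, hIoo⟩ := exists_mem_tile_forall_mem_Ioo hneg hpos
    obtain ⟨hlow, hupp⟩ := abs_le.1 (hsub hx i)
    have h1 : (-n : ℝ) < a i + 1 := hlow.trans_lt (hIoo i).2
    have h2 : (a i : ℝ) < n := (hIoo i).1.trans_le hupp
    exact ⟨Int.lt_add_one_iff.1 (by exact_mod_cast h1), by exact_mod_cast h2⟩

variable {d : ℕ} {f : (Fin (d + 1) → ℝ) →ᵃ[ℝ] ℝ}

lemma card_meetingCubes (h0 : ∀ p, f (latticePoint p) ≠ 0) (n : ℕ) :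
    (meetingCubes f n).card = ∑ i, crossingCount f i n (pathEdge f i) := by
  classical
  simp only [meetingCubes, crossingCount, Finset.card_filter, ← card_crosses_pathEdge h0]
  exact Finset.sum_comm

lemma sum_nVert_tile (h0 : ∀ p, f (latticePoint p) ≠ 0) (n : ℕ) :
    ∑ a ∈ meetingCubes f n, nVert (tile f a) =
      ∑ i, ∑ ε ∈ Finset.Icc 0 1, crossingCount f i n ε := by
  classical
  have hempty : ∀ a ∈ latticeBox (d + 1) n, nVert (tile f a) ≠ 0 → (tile f a).Nonempty := by
    intro a _ ha
    contrapose! ha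
    simp [nVert, ha]
  rw [meetingCubes, Finset.sum_filter_of_ne hempty]
  simp only [nVert_tile h0, crossingCount, Finset.card_filter]
  rw [Finset.sum_comm]
  exact Finset.sum_congr rfl fun i _ => Finset.sum_comm

lemma add_insertNth_mem_latticeBox {n : ℕ} {i : Fin (d + 1)} {a : Fin (d + 1) → ℤ} {v : Fin d → ℤ}
    (ha : a ∈ latticeBox (d + 1) n) (hinner : i.removeNth a ∈ latticeBox d (n - 1))
    (hv : ∀ j, |v j| ≤ 1) : a + i.insertNth 0 v ∈ latticeBox (d + 1) n := by
  rw [mem_latticeBox_iff] at ha hinner ⊢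
  refine i.forall_iff_succAbove.2 ⟨by simpa using ha i, fun j => ?_⟩
  have hj := hinner j
  have hvj := abs_le.1 (hv j)
  simp only [Fin.removeNth] at hj
  simp only [Pi.add_apply, Fin.insertNth_apply_succAbove]
  omega

/-- Translating by `ε - ε'` matches the two kinds of crossings, except where it leaves the box;
the exceptional crossings lie on different lines in direction `i`, all of them through the boundary
layer of the `d`-dimensional box. -/
lemma crossingCount_le_add_card_sdiff (i : Fin (d + 1)) (n : ℕ) {ε ε' : Fin d → ℤ}
    (hε : ε ∈ Finset.Icc 0 1) (hε' : ε' ∈ Finset.Icc 0 1) :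
    crossingCount f i n ε ≤
      crossingCount f i n ε' + (latticeBox d n \ latticeBox d (n - 1)).card := by
  classical
  rw [crossingCount, ← Finset.card_filter_add_card_filter_not
    (fun a : Fin (d + 1) → ℤ => i.removeNth a ∈ latticeBox d (n - 1))]
  rw [Finset.mem_Icc] at hε hε'
  have hdiff : ∀ j, |(ε - ε') j| ≤ 1 := fun j =>
    (abs_sub_le_of_nonneg_of_le (hε.1 j) (hε.2 j) (hε'.1 j) (hε'.2 j) :)
  refine add_le_add ?_ ?_
  · refine Finset.card_le_card_of_injOn (· + i.insertNth 0 (ε - ε')) (fun a ha => ?_)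
      (add_left_injective _).injOn
    simp only [Finset.mem_coe, Finset.mem_filter] at ha ⊢
    refine ⟨add_insertNth_mem_latticeBox ha.1.1 ha.2 hdiff, ?_⟩
    rw [add_assoc, ← Fin.insertNth_add, add_zero, sub_add_cancel]
    exact ha.1.2
  · refine Finset.card_le_card_of_injOn i.removeNth (fun a ha => ?_) (fun a ha b hb hab => ?_)
    · simp only [Finset.mem_coe, Finset.mem_filter, Finset.mem_sdiff] at ha ⊢
      exact ⟨mem_latticeBox_iff.2 fun j => mem_latticeBox_iff.1 ha.1.1 _, ha.2⟩
    · simp only [Finset.mem_coe, Finset.mem_filter] at ha hb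
      refine add_right_cancel (ha.1.2.eq_of_removeNth_eq hb.1.2 (funext fun j => ?_))
      simpa [Fin.removeNth] using congrFun hab j

lemma abs_sum_nVert_tile_sub_le (h0 : ∀ p, f (latticePoint p) ≠ 0) (n : ℕ) :
    |(∑ a ∈ meetingCubes f n, nVert (tile f a) : ℝ) - 2 ^ d * (meetingCubes f n).card| ≤
      (d + 1) * 2 ^ d * ((2 * n) ^ d - (2 * (n - 1 : ℕ)) ^ d) := by
  have hcube : (Finset.Icc (0 : Fin d → ℤ) 1).card = 2 ^ d := by simp [Pi.card_Icc]
  have hlayer : ((latticeBox d n \ latticeBox d (n - 1)).card : ℝ) =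
      (2 * n) ^ d - (2 * (n - 1 : ℕ)) ^ d := by
    rw [Finset.cast_card_sdiff (latticeBox_mono d (n.sub_le 1))]
    simp [card_latticeBox]
  calc |(∑ a ∈ meetingCubes f n, nVert (tile f a) : ℝ) - 2 ^ d * (meetingCubes f n).card|
      = |∑ i, ∑ ε ∈ Finset.Icc 0 1,
          ((crossingCount f i n ε : ℝ) - crossingCount f i n (pathEdge f i))| := by
        rw [card_meetingCubes h0, ← Nat.cast_sum, sum_nVert_tile h0]
        simp [Finset.sum_sub_distrib, hcube, Finset.mul_sum]
    _ ≤ ∑ i : Fin (d + 1), ∑ ε ∈ Finset.Icc (0 : Fin d → ℤ) 1,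
          ((latticeBox d n \ latticeBox d (n - 1)).card : ℝ) := by
        refine (Finset.abs_sum_le_sum_abs _ _).trans (Finset.sum_le_sum fun i _ => ?_)
        refine (Finset.abs_sum_le_sum_abs _ _).trans (Finset.sum_le_sum fun ε hε => ?_)
        rw [abs_sub_le_iff, sub_le_iff_le_add', sub_le_iff_le_add']
        exact ⟨mod_cast crossingCount_le_add_card_sdiff i n hε (pathEdge_mem_Icc i),
          mod_cast crossingCount_le_add_card_sdiff i n (pathEdge_mem_Icc i) hε⟩
    _ = (d + 1) * 2 ^ d * ((2 * n) ^ d - (2 * (n - 1 : ℕ)) ^ d) := by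
        simp only [Finset.sum_const, hlayer, hcube, Finset.card_fin, nsmul_eq_mul]
        push_cast
        ring

end Counting

section Growth

open Asymptotics

variable {d : ℕ} {f : (Fin (d + 1) → ℝ) →ᵃ[ℝ] ℝ}

/-- The zero set of `f` is a graph over the coordinate hyperplane `x i = 0`; the bound `hn` keeps
its height over `[0, M]^d` below `n`. -/
lemma exists_mem_meetingCubes_removeNth_eq {i : Fin (d + 1)} {M n : ℕ} (hM : M ≤ n)
    (hn : |f 0| + M * ∑ j, |coordSlope f j| < n * |coordSlope f i|) {q : Fin d → ℤ}
    (hq : ∀ j, 0 ≤ q j ∧ q j < M) : ∃ a ∈ meetingCubes f n, i.removeNth a = q := by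
  classical
  have hs : coordSlope f i ≠ 0 := by
    intro hs
    rw [hs, abs_zero, mul_zero] at hn
    exact hn.not_ge (by positivity)
  have hbound : |f (i.insertNth 0 (latticePoint q))| < n * |coordSlope f i| := by
    refine (abs_map_le (M := M) (i.forall_iff_succAbove.2 ⟨by simp, fun j => ?_⟩)).trans_lt hn
    have h0 : (0 : ℝ) ≤ q j := by exact_mod_cast (hq j).1
    have h1 : (q j : ℝ) ≤ M := by exact_mod_cast (hq j).2.le
    simpa [abs_of_nonneg h0] using h1
  set t : ℝ := -f (i.insertNth 0 (latticePoint q)) / coordSlope f i with ht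
  have habs : |t| < n := by
    rwa [ht, abs_div, abs_neg, div_lt_iff₀ (abs_pos.2 hs)]
  have hft : f (i.insertNth t (latticePoint q)) = 0 := by
    rw [map_insertNth, ht, div_mul_cancel₀ _ hs, add_neg_cancel]
  refine ⟨i.insertNth ⌊t⌋ q, Finset.mem_filter.2 ⟨mem_latticeBox_iff.2 ?_,
    i.insertNth t (latticePoint q), hft, ?_⟩, i.removeNth_insertNth _ _⟩
  · refine i.forall_iff_succAbove.2 ⟨?_, fun j => ?_⟩
    · rw [Fin.insertNth_apply_same, Int.le_floor, Int.floor_lt]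
      exact ⟨by exact_mod_cast (abs_lt.1 habs).1.le, by exact_mod_cast (abs_lt.1 habs).2⟩
    · have := hq j
      rw [Fin.insertNth_apply_succAbove]
      omega
  · refine i.forall_iff_succAbove.2 ⟨?_, fun j => by simp⟩
    simp [Int.floor_le, (Int.lt_floor_add_one t).le]

lemma pow_le_card_meetingCubes {i : Fin (d + 1)} {M n : ℕ} (hM : M ≤ n)
    (hn : |f 0| + M * ∑ j, |coordSlope f j| < n * |coordSlope f i|) :
    M ^ d ≤ (meetingCubes f n).card := by
  calc M ^ d = (Fintype.piFinset fun _ : Fin d => Finset.Ico (0 : ℤ) M).card := by simp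
    _ ≤ (meetingCubes f n).card := by
      refine Finset.card_le_card_of_surjOn i.removeNth fun q hq => ?_
      exact exists_mem_meetingCubes_removeNth_eq hM hn (by simpa using hq)

lemma natCast_pow_isBigO_card_meetingCubes (hf : f.linear ≠ 0) :
    (fun n : ℕ => (n : ℝ) ^ d) =O[Filter.atTop] fun n => ((meetingCubes f n).card : ℝ) := by
  obtain ⟨i, hi⟩ := exists_coordSlope_ne_zero hf
  obtain ⟨K, hK⟩ := exists_nat_gt ((|f 0| + ∑ j, |coordSlope f j|) / |coordSlope f i|)
  have hK0 : 0 < K := Nat.cast_pos.1 (lt_of_le_of_lt (by positivity) hK)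
  rw [div_lt_iff₀ (abs_pos.2 hi)] at hK
  refine .of_bound ((2 * K) ^ d) ((Filter.eventually_ge_atTop K).mono fun n hn => ?_)
  have hquot : 1 ≤ n / K := (Nat.one_le_div_iff hK0).2 hn
  have hmul : ((n / K : ℕ) : ℝ) * K ≤ n := by exact_mod_cast Nat.div_mul_le_self n K
  have hcard : (n / K) ^ d ≤ (meetingCubes f n).card := by
    refine pow_le_card_meetingCubes (i := i) (n.div_le_self K) ?_
    have h1 : (1 : ℝ) ≤ (n / K : ℕ) := by exact_mod_cast hquot
    calc |f 0| + (n / K : ℕ) * ∑ j, |coordSlope f j|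
        ≤ (n / K : ℕ) * (|f 0| + ∑ j, |coordSlope f j|) := by nlinarith [abs_nonneg (f 0)]
      _ < (n / K : ℕ) * (K * |coordSlope f i|) := by gcongr
      _ ≤ n * |coordSlope f i| := by rw [← mul_assoc]; gcongr
  have hle : n ≤ 2 * K * (n / K) := by
    have := Nat.lt_mul_div_succ n hK0
    nlinarith
  rw [Real.norm_of_nonneg (by positivity), Real.norm_of_nonneg (by positivity)]
  calc (n : ℝ) ^ d ≤ (2 * K * (n / K : ℕ)) ^ d := by gcongr; exact_mod_cast hle
    _ = (2 * K) ^ d * ((n / K) ^ d : ℕ) := by push_cast; ring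
    _ ≤ (2 * K) ^ d * (meetingCubes f n).card := by gcongr

lemma pow_sub_pow_isLittleO (d : ℕ) :
    (fun n : ℕ => (2 * n : ℝ) ^ d - (2 * (n - 1 : ℕ)) ^ d) =o[Filter.atTop]
      fun n : ℕ => (n : ℝ) ^ d := by
  have hpred : (fun n : ℕ => ((n - 1 : ℕ) : ℝ)) ~[Filter.atTop] fun n : ℕ => (n : ℝ) := by
    have hone : (fun _ : ℕ => (-1 : ℝ)) =o[Filter.atTop] fun n : ℕ => (n : ℝ) :=
      isLittleO_const_left.2 (.inr (tendsto_norm_atTop_atTop.comp tendsto_natCast_atTop_atTop))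
    refine hone.congr' ?_ .rfl
    filter_upwards [Filter.eventually_ge_atTop 1] with n hn
    simp [Nat.cast_sub hn]
  have hpow := ((IsEquivalent.refl (u := fun _ : ℕ => (2 : ℝ))).mul hpred).pow d
  have hmul : (fun n : ℕ => (2 * n : ℝ) ^ d) =O[Filter.atTop] fun n : ℕ => (n : ℝ) ^ d := by
    simpa only [mul_pow] using isBigO_const_mul_self _ _ _
  simpa using (hpow.isLittleO.trans_isBigO hmul).neg_left

theorem tendsto_average_nVert_tile (hf : f.linear ≠ 0) (h0 : ∀ p, f (latticePoint p) ≠ 0) :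
    Filter.Tendsto
      (fun n => (∑ a ∈ meetingCubes f n, nVert (tile f a) : ℝ) / (meetingCubes f n).card)
      Filter.atTop (nhds (2 ^ d)) := by
  have hgrowth := natCast_pow_isBigO_card_meetingCubes hf
  refine tendsto_div_of_sub_isLittleO (.trans_isBigO ?_ hgrowth) ?_
  · refine (IsBigO.of_bound ((d + 1) * 2 ^ d) (.of_forall fun n => ?_)).trans_isLittleO
      (pow_sub_pow_isLittleO d)
    refine (abs_sum_nVert_tile_sub_le h0 n).trans ?_
    gcongr
    exact le_abs_self _
  · filter_upwards [hgrowth.eq_zero_imp, Filter.eventually_ge_atTop 1] with n himp hn hzero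
    exact pow_ne_zero d (Nat.cast_ne_zero.2 (by omega)) (himp hzero)

end Growth

theorem ave_tiles_eq_four_general {d : ℕ} (L : AffineSubspace ℝ (Fin (d + 1) → ℝ))
    (hne : (L : Set (Fin (d + 1) → ℝ)).Nonempty)
    (hdim : Module.finrank ℝ L.direction = d)
    (hlat : ∀ a : Fin (d + 1) → ℤ, (fun i => (a i : ℝ)) ∉ L)
    (T : (Fin (d + 1) → ℤ) → Set (Fin (d + 1) → ℝ))
    (hT : ∀ a, T a = (L : Set (Fin (d + 1) → ℝ)) ∩
      {x | ∀ i, (a i : ℝ) ≤ x i ∧ x i ≤ (a i : ℝ) + 1})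
    (N : ℕ → Set (Fin (d + 1) → ℤ))
    (hN : ∀ n, N n = {a | (T a).Nonempty ∧ T a ⊆ {x | ∀ i, |x i| ≤ (n : ℝ)}}) :
    Filter.Tendsto
      (fun n : ℕ => (∑ᶠ a ∈ N n, (nVert (T a) : ℝ)) / ((N n).ncard : ℝ))
      Filter.atTop (nhds (2 ^ d)) := by
  obtain ⟨f, hf, hfL⟩ := exists_affineMap_eq_zero_iff_mem L hne (by simp [hdim])
  have h0 : ∀ p, f (latticePoint p) ≠ 0 := fun p hp => hlat p ((hfL _).1 hp)
  obtain rfl : T = tile f := funext fun a => by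
    rw [hT]
    exact Set.ext fun x => and_congr_left' (hfL x).symm
  have hcubes : ∀ n, N n = meetingCubes f n := fun n => by
    rw [hN]
    exact Set.ext fun a => (mem_meetingCubes_iff h0).symm
  simp only [hcubes, finsum_mem_coe_finset, Set.ncard_coe_finset]
  exact tendsto_average_nVert_tile hf h0

/-- Theorem 7.1. If a two-dimensional affine plane `L ⊂ ℝ³` contains
no lattice point, then the average number of vertices of the tiles `T(a) = L ∩ (a + [0,1]³)`
tends to `4`. -/
theorem ave_tiles_eq_four (L : AffineSubspace ℝ (Fin 3 → ℝ))
    (hdim : Module.finrank ℝ L.direction = 2)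
    (hlat : ∀ a : Fin 3 → ℤ, (fun i => (a i : ℝ)) ∉ L)
    (T : (Fin 3 → ℤ) → Set (Fin 3 → ℝ))
    (hT : ∀ a, T a = (L : Set (Fin 3 → ℝ)) ∩
      {x | ∀ i, (a i : ℝ) ≤ x i ∧ x i ≤ (a i : ℝ) + 1})
    (N : ℕ → Set (Fin 3 → ℤ))
    (hN : ∀ n, N n = {a | (T a).Nonempty ∧ T a ⊆ {x | ∀ i, |x i| ≤ (n : ℝ)}}) :
    Filter.Tendsto
      (fun n : ℕ => (∑ᶠ a ∈ N n, (nVert (T a) : ℝ)) / ((N n).ncard : ℝ))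
      Filter.atTop (nhds 4) := by
  have h := ave_tiles_eq_four_general (d := 2) L
    (nonempty_of_finrank_direction_pos (by omega)) hdim hlat T hT N hN
  rwa [show (2 : ℝ) ^ 2 = 4 by norm_num] at h
end
end

section
/- Let P ⊂ ℝ^d be a convex polytope (the convex hull of a finite point set), let z ∈ ℝ^d be nonzero, and let t ∈ ℝ be such that z·v ≠ t for every vertex (extreme point) v of P. Then the number of vertices of P ∩ {x : z·x ≤ t} plus the number of vertices of P ∩ {x : z·x ≥ t} equals the number of vertices of P plus twice the number of vertices of the section P ∩ {x : z·x = t}. -/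
open scoped Pointwise BigOperators

noncomputable section

/-!
Write `H` for the hyperplane `{f = t}`. An extreme point of `P ∩ {f ≤ t}` with `f < t` is an
extreme point of `P`, because a segment of `P` around it can be shrunk towards it until it lies in
the half-space. One with `f = t` is an extreme point of `P ∩ H`, because `P ∩ H` is an extreme
subset of `P ∩ {f ≤ t}`. So each vertex of the section is counted once on each side, and each
vertex of `P`, being off `H`, on exactly one side. Convexity suffices for this if vertices are
counted in `ℕ∞`.

For the convex hull of a finite set `s` all the counts are finite: if two points of the section are
convex combinations, with positive weights, of the same subset of `s`, the segment from one to the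
other can be prolonged inside the section, so each subset of `s` yields at most one vertex of it.
-/

section OpenSegment

variable {𝕜 E : Type*} [Field 𝕜] [LinearOrder 𝕜] [IsStrictOrderedRing 𝕜] [AddCommGroup E]
  [Module 𝕜 E]

theorem mem_openSegment_add_smul_sub (x y : E) {e : 𝕜} (he : 0 < e) :
    x ∈ openSegment 𝕜 y (x + e • (x - y)) := by
  refine ⟨e / (1 + e), 1 / (1 + e), by positivity, by positivity, by field_simp; ring, ?_⟩
  match_scalars <;> field_simp
  ring

theorem mem_openSegment_homothety {x a b : E} (h : x ∈ openSegment 𝕜 a b) (e : 𝕜) :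
    x ∈ openSegment 𝕜 (AffineMap.homothety x e a) (AffineMap.homothety x e b) := by
  rw [← image_openSegment]
  exact ⟨x, h, AffineMap.homothety_apply_same x e⟩

end OpenSegment

section OpenHull

variable {𝕜 E F : Type*} [Field 𝕜] [LinearOrder 𝕜] [IsStrictOrderedRing 𝕜] [AddCommGroup E]
  [Module 𝕜 E] [AddCommGroup F] [Module 𝕜 F]

variable (𝕜) in
/-- The convex combinations of `T` in which every point of `T` has positive weight. For `𝕜 = ℝ` this
is the relative interior of the polytope `convexHull ℝ T`. -/
def openHull (T : Finset E) : Set E :=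
  {x | ∃ w : E → 𝕜, (∀ i ∈ T, 0 < w i) ∧ ∑ i ∈ T, w i = 1 ∧ ∑ i ∈ T, w i • i = x}

theorem openHull_subset_convexHull (T : Finset E) : openHull 𝕜 T ⊆ convexHull 𝕜 (T : Set E) :=
  fun _ ⟨w, hw, hw₁, hwx⟩ ↦ Finset.mem_convexHull'.2 ⟨w, fun i hi ↦ (hw i hi).le, hw₁, hwx⟩

theorem exists_subset_mem_openHull {s : Finset E} {x : E} (hx : x ∈ convexHull 𝕜 (s : Set E)) :
    ∃ T ⊆ s, x ∈ openHull 𝕜 T := by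
  classical
  obtain ⟨w, hw, hw₁, hwx⟩ := Finset.mem_convexHull'.1 hx
  refine ⟨{i ∈ s | w i ≠ 0}, Finset.filter_subset _ _, w, fun i hi ↦ ?_, ?_, ?_⟩
  · obtain ⟨his, hi₀⟩ := Finset.mem_filter.1 hi
    exact (hw i his).lt_of_ne' hi₀
  · rw [Finset.sum_filter_ne_zero, hw₁]
  · rw [← hwx]
    exact Finset.sum_filter_of_ne fun i _ ↦ mt fun h ↦ by rw [h, zero_smul]

theorem exists_pos_add_smul_sub_mem_convexHull {T : Finset E} {x y : E} (hx : x ∈ openHull 𝕜 T)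
    (hy : y ∈ convexHull 𝕜 (T : Set E)) :
    ∃ e : 𝕜, 0 < e ∧ x + e • (x - y) ∈ convexHull 𝕜 (T : Set E) := by
  obtain ⟨w, hw, hw₁, rfl⟩ := hx
  obtain ⟨v, hv, hv₁, rfl⟩ := Finset.mem_convexHull'.1 hy
  have hT : T.Nonempty := Finset.nonempty_of_sum_ne_zero (hw₁.trans_ne one_ne_zero)
  obtain ⟨j, hj, hmin⟩ := T.exists_min_image w hT
  refine ⟨w j, hw j hj, Finset.mem_convexHull'.2 ⟨fun i ↦ w i + w j * (w i - v i), ?_, ?_, ?_⟩⟩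
  · intro i hi
    have hvi : v i ≤ 1 := hv₁ ▸ Finset.single_le_sum hv hi
    have hle : w j * v i ≤ w i := (mul_le_of_le_one_right (hw j hj).le hvi).trans (hmin i hi)
    linarith [mul_pos (hw j hj) (hw i hi)]
  · simp [Finset.sum_add_distrib, ← Finset.mul_sum, hw₁, hv₁]
  · simp only [add_smul, mul_smul, sub_smul, Finset.sum_add_distrib, ← Finset.smul_sum,
      Finset.sum_sub_distrib]

theorem subsingleton_extremePoints_inter_fiber_inter_openHull {K : Set E} {T : Finset E}
    (hTK : convexHull 𝕜 (T : Set E) ⊆ K) (f : E →ₗ[𝕜] F) (c : F) :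
    ((K ∩ {x | f x = c}).extremePoints 𝕜 ∩ openHull 𝕜 T).Subsingleton := by
  rintro x ⟨hx, hxT⟩ y ⟨hy, hyT⟩
  obtain ⟨e, he, hmem⟩ :=
    exists_pos_add_smul_sub_mem_convexHull hxT (openHull_subset_convexHull T hyT)
  have hxc : f x = c := hx.1.2
  have hyc : f y = c := hy.1.2
  have hfib : f (x + e • (x - y)) = c := by simp [hxc, hyc]
  exact (hx.2 hy.1 ⟨hTK hmem, hfib⟩ (mem_openSegment_add_smul_sub x y he)).symm

theorem finite_extremePoints_convexHull_inter_fiber (s : Finset E) (f : E →ₗ[𝕜] F) (c : F) :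
    ((convexHull 𝕜 (s : Set E) ∩ {x | f x = c}).extremePoints 𝕜).Finite := by
  set V := (convexHull 𝕜 (s : Set E) ∩ {x | f x = c}).extremePoints 𝕜
  have hcover : V ⊆ ⋃ T ∈ s.powerset, V ∩ openHull 𝕜 T := fun x hx ↦ by
    obtain ⟨T, hTs, hxT⟩ := exists_subset_mem_openHull hx.1.1
    exact Set.mem_biUnion (Finset.mem_powerset.2 hTs) ⟨hx, hxT⟩
  refine (s.powerset.finite_toSet.biUnion fun T hT ↦ ?_).subset hcover
  have hTs : (T : Set E) ⊆ s := Finset.coe_subset.2 (Finset.mem_powerset.1 hT)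
  exact (subsingleton_extremePoints_inter_fiber_inter_openHull (convexHull_mono hTs) f c).finite

end OpenHull

section Cut

variable {𝕜 E : Type*} [Field 𝕜] [LinearOrder 𝕜] [IsStrictOrderedRing 𝕜] [AddCommGroup E]
  [Module 𝕜 E] {P : Set E}

theorem isExtreme_inter_le_inter_eq (P : Set E) (f : E →ₗ[𝕜] 𝕜) (t : 𝕜) :
    IsExtreme 𝕜 (P ∩ {x | f x ≤ t}) (P ∩ {x | f x = t}) := by
  refine ⟨fun x hx ↦ ⟨hx.1, hx.2.le⟩, ?_⟩
  rintro a ⟨haP, hat : f a ≤ t⟩ b ⟨-, hbt : f b ≤ t⟩ _ ⟨-, hxt⟩ ⟨p, q, hp, hq, hpq, rfl⟩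
  have hcomb : p * f a + q * f b = t := by simpa using hxt
  refine ⟨haP, hat.eq_of_not_lt fun hlt ↦ hcomb.not_lt ?_⟩
  calc p * f a + q * f b < p * t + q * t :=
        add_lt_add_of_lt_of_le (mul_lt_mul_of_pos_left hlt hp) (mul_le_mul_of_nonneg_left hbt hq.le)
    _ = t := by rw [← add_mul, hpq, one_mul]

theorem mem_extremePoints_of_mem_extremePoints_inter_le (hP : Convex 𝕜 P) {f : E →ₗ[𝕜] 𝕜} {t : 𝕜}
    {x : E} (hx : x ∈ (P ∩ {y | f y ≤ t}).extremePoints 𝕜) (hxt : f x < t) :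
    x ∈ P.extremePoints 𝕜 := by
  refine ⟨hx.1.1, fun a ha b hb hab ↦ ?_⟩
  obtain ⟨e, he, hbound⟩ :=
    exists_pos_mul_lt (sub_pos.2 hxt) (max (t - f x) (max (f a - f x) (f b - f x)))
  have hmul_lt {r : 𝕜} (hr : r ≤ max (t - f x) (max (f a - f x) (f b - f x))) :
      r * e < t - f x :=
    (mul_le_mul_of_nonneg_right hr he.le).trans_lt hbound
  have he₁ : e < 1 := by
    simpa [mul_lt_iff_lt_one_right (sub_pos.2 hxt)] using hmul_lt (le_max_left _ _)
  have hshrink {c : E} (hc : c ∈ P) (hct : (f c - f x) * e < t - f x) :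
      AffineMap.homothety x e c ∈ P ∩ {y | f y ≤ t} := by
    refine ⟨hP.lineMap_mem hx.1.1 hc ⟨he.le, he₁.le⟩, ?_⟩
    simp only [AffineMap.homothety_apply, vsub_eq_sub, vadd_eq_add, map_add, map_smul, map_sub,
      smul_eq_mul, Set.mem_ofPred_eq]
    linarith
  have hfix : AffineMap.homothety x e a = x :=
    hx.2 (hshrink ha (hmul_lt (by simp))) (hshrink hb (hmul_lt (by simp)))
      (mem_openSegment_homothety hab e)
  exact AffineMap.homothety_injective x he.ne'
    (hfix.trans (AffineMap.homothety_apply_same x e).symm)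

theorem extremePoints_inter_le (hP : Convex 𝕜 P) (f : E →ₗ[𝕜] 𝕜) (t : 𝕜) :
    (P ∩ {x | f x ≤ t}).extremePoints 𝕜 =
      P.extremePoints 𝕜 ∩ {x | f x < t} ∪ (P ∩ {x | f x = t}).extremePoints 𝕜 := by
  have hface := isExtreme_inter_le_inter_eq P f t
  refine Set.Subset.antisymm (fun x hx ↦ ?_) (Set.union_subset ?_ ?_)
  · obtain hlt | heq := hx.1.2.lt_or_eq
    · exact .inl ⟨mem_extremePoints_of_mem_extremePoints_inter_le hP hx hlt, hlt⟩
    · exact .inr (hface.extremePoints_eq ▸ ⟨⟨hx.1.1, heq⟩, hx⟩)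
  · rintro x ⟨hx, hlt⟩
    exact inter_extremePoints_subset_extremePoints_of_subset Set.inter_subset_left
      ⟨⟨hx.1, hlt.le⟩, hx⟩
  · exact hface.extremePoints_subset_extremePoints

theorem encard_extremePoints_inter_le (hP : Convex 𝕜 P) (f : E →ₗ[𝕜] 𝕜) (t : 𝕜) :
    ((P ∩ {x | f x ≤ t}).extremePoints 𝕜).encard =
      (P.extremePoints 𝕜 ∩ {x | f x < t}).encard +
        ((P ∩ {x | f x = t}).extremePoints 𝕜).encard := by
  rw [extremePoints_inter_le hP, Set.encard_union_eq]
  exact Set.disjoint_left.2 fun x hlt heq ↦ hlt.2.ne heq.1.2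

theorem encard_extremePoints_inter_ge (hP : Convex 𝕜 P) (f : E →ₗ[𝕜] 𝕜) (t : 𝕜) :
    ((P ∩ {x | t ≤ f x}).extremePoints 𝕜).encard =
      (P.extremePoints 𝕜 ∩ {x | t < f x}).encard +
        ((P ∩ {x | f x = t}).extremePoints 𝕜).encard := by
  simpa using encard_extremePoints_inter_le hP (-f) (-t)

theorem encard_eq_encard_inter_lt_add_encard_inter_gt {α β : Type*} [LinearOrder β] {V : Set α}
    {g : α → β} {t : β} (hV : ∀ v ∈ V, g v ≠ t) :
    V.encard = (V ∩ {x | g x < t}).encard + (V ∩ {x | t < g x}).encard := by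
  rw [← Set.encard_union_eq (Set.disjoint_left.2 fun x hlt hgt ↦ hlt.2.asymm hgt.2),
    ← Set.inter_union_distrib_left]
  exact congrArg Set.encard (Set.inter_eq_left.2 fun v hv ↦ lt_or_gt_of_ne (hV v hv)).symm

theorem vert_count_cut_general (hP : Convex 𝕜 P) (f : E →ₗ[𝕜] 𝕜) (t : 𝕜)
    (hvert : ∀ v ∈ P.extremePoints 𝕜, f v ≠ t) :
    ((P ∩ {x | f x ≤ t}).extremePoints 𝕜).encard + ((P ∩ {x | t ≤ f x}).extremePoints 𝕜).encard =
      (P.extremePoints 𝕜).encard + 2 * ((P ∩ {x | f x = t}).extremePoints 𝕜).encard := by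
  rw [encard_extremePoints_inter_le hP, encard_extremePoints_inter_ge hP,
    encard_eq_encard_inter_lt_add_encard_inter_gt hvert]
  ring

end Cut

theorem ncard_add_ncard_eq_of_encard {α : Type*} {A B C D : Set α} (hC : C.Finite) (hD : D.Finite)
    (h : A.encard + B.encard = C.encard + 2 * D.encard) :
    A.ncard + B.ncard = C.ncard + 2 * D.ncard := by
  rw [← hC.cast_ncard_eq, ← hD.cast_ncard_eq] at h
  have hAB : A.encard + B.encard ≠ ⊤ := h ▸ ENat.natCast_ne_top (C.ncard + 2 * D.ncard)
  obtain ⟨hA, hB⟩ := WithTop.add_ne_top.1 hAB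
  rw [← (Set.encard_ne_top_iff.1 hA).cast_ncard_eq,
    ← (Set.encard_ne_top_iff.1 hB).cast_ncard_eq] at h
  exact_mod_cast h

/-- Cutting a polytope `P` by a hyperplane `{x : z·x = t}` avoiding the
vertices of `P`: the vertex numbers of the two pieces add up to the number of vertices of
`P` plus twice the number of vertices of the section. -/
theorem vert_count_cut (d : ℕ) (P : Set (Fin d → ℝ)) (hP : IsPolytope P)
    (z : Fin d → ℝ) (hz : z ≠ 0) (t : ℝ)
    (hvert : ∀ v ∈ Set.extremePoints ℝ P, dotp z v ≠ t) :
    nVert (P ∩ {x | dotp z x ≤ t}) + nVert (P ∩ {x | t ≤ dotp z x}) =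
      nVert P + 2 * nVert (P ∩ {x | dotp z x = t}) := by
  obtain ⟨s, rfl⟩ := hP
  exact ncard_add_ncard_eq_of_encard (s.finite_toSet.subset extremePoints_convexHull_subset)
    (finite_extremePoints_convexHull_inter_fiber s (dotProductBilin ℝ ℝ z) t)
    (vert_count_cut_general (convex_convexHull ℝ _) (dotProductBilin ℝ ℝ z) t hvert)
end
end

section
/- Let P ⊂ ℝ^d be a convex polytope with nonempty interior, with V₀ vertices, and let z ∈ ℝ^d be nonzero, with t⁻ = min{z·x : x ∈ P} and t⁺ = max{z·x : x ∈ P}. Then (1/(t⁺−t⁻)) · ∫_{t⁻}^{t⁺} ( (number of vertices of P ∩ {x : z·x ≤ t}) + (number of vertices of P ∩ {x : z·x ≥ t}) )/2 dt = V₀/2 + A(P,z). -/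
open scoped Pointwise BigOperators

noncomputable section

/-!
Fix a linear height function `L` on the convex hull `P` of a finite set `V`. Contracting `P` towards
one of its points shows that the vertices of `P ∩ {L ≤ t}` are the vertices of `P` below level `t`
together with the vertices of the section at level `t`. So unless `t` is the height of a vertex, the
two pieces of the cut at `t` have `V₀ + 2 n(t)` vertices in total, where `n(t)` is the number of
vertices of the section, and the formula follows by averaging over `t`.

For `t` outside the finite set `L '' V`, each vertex of the section lies on an open segment between
two points of `V` on either side of the level, and every point of such a segment is then a vertex of
the section at its own height. As `t` varies the vertices slide along these segments, so `n` is
lower semicontinuous off `L '' V`, and it is bounded there by the number of pairs of points of `V`: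
it is integrable.
-/

section CutVertices

open Set Filter MeasureTheory
open scoped Topology

variable {E F : Type*} [AddCommGroup E] [Module ℝ E] [AddCommGroup F] [Module ℝ F]

theorem map_mem_openSegment (f : E →ᵃ[ℝ] F) {x a b : E} (hx : x ∈ openSegment ℝ a b) :
    f x ∈ openSegment ℝ (f a) (f b) :=
  image_openSegment ℝ f a b ▸ mem_image_of_mem f hx

theorem eq_left_of_map_mem_extremePoints {f : E →ᵃ[ℝ] F} (hf : Function.Injective f)
    {B : Set F} {x a b : E} (hfx : f x ∈ B.extremePoints ℝ) (ha : f a ∈ B) (hb : f b ∈ B)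
    (hx : x ∈ openSegment ℝ a b) : a = x :=
  hf (hfx.2 ha hb (map_mem_openSegment f hx))

theorem homothety_injective (c : E) {r : ℝ} (hr : r ≠ 0) :
    Function.Injective (AffineMap.homothety c r) := fun x y h => by
  simpa [AffineMap.homothety_apply, hr] using h

theorem homothety_mem_of_convex {P : Set E} (hP : Convex ℝ P) {c x : E} (hc : c ∈ P) (hx : x ∈ P)
    {r : ℝ} (hr : r ∈ Icc (0 : ℝ) 1) : AffineMap.homothety c r x ∈ P := by
  rw [AffineMap.homothety_eq_lineMap]
  exact hP.lineMap_mem hc hx hr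

theorem exists_mem_stdSimplex_mem_openSegment {ι : Type*} [Fintype ι] {c d : ι → ℝ}
    (hc : c ∈ stdSimplex ℝ ι) (hpos : ∀ i, 0 < c i) (hd : d ∈ stdSimplex ℝ ι) :
    ∃ e ∈ stdSimplex ℝ ι, c ∈ openSegment ℝ d e := by
  have hnonneg : ∀ᶠ δ : ℝ in 𝓝[>] 0, ∀ i, 0 < c i + δ * (c i - d i) := by
    refine nhdsWithin_le_nhds (eventually_all.2 fun i => ?_)
    have hcont : Continuous fun δ : ℝ => c i + δ * (c i - d i) := by fun_prop
    exact hcont.tendsto 0 |>.eventually_const_lt (by simpa using hpos i)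
  obtain ⟨δ, hδpos, hδ : 0 < δ⟩ := (hnonneg.and self_mem_nhdsWithin).exists
  refine ⟨c + δ • (c - d), ⟨fun i => (hδpos i).le, ?_⟩,
    δ / (1 + δ), 1 / (1 + δ), by positivity, by positivity, by field_simp; ring, ?_⟩
  · simp [Finset.sum_add_distrib, ← Finset.mul_sum, hc.2, hd.2]
  · match_scalars
    · field_simp
      ring
    · field_simp

theorem exists_mem_convexHull_range_mem_openSegment {ι : Type*} [Fintype ι] {c : ι → ℝ} {p : ι → E}
    (hpos : ∀ i, 0 < c i) (hsum : ∑ i, c i = 1) {y : E} (hy : y ∈ convexHull ℝ (range p)) :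
    ∃ r ∈ convexHull ℝ (range p), ∑ i, c i • p i ∈ openSegment ℝ y r := by
  classical
  have himage : convexHull ℝ (range p) = Fintype.linearCombination ℝ p '' stdSimplex ℝ ι := by
    rw [← convexHull_rangle_single_eq_stdSimplex, LinearMap.image_convexHull, ← range_comp]
    congr 2
    ext i
    simp
  rw [himage] at hy ⊢
  obtain ⟨d, hd, rfl⟩ := hy
  obtain ⟨e, he, hce⟩ := exists_mem_stdSimplex_mem_openSegment ⟨fun i => (hpos i).le, hsum⟩ hpos hd
  exact ⟨_, mem_image_of_mem _ he,
    map_mem_openSegment (Fintype.linearCombination ℝ p).toAffineMap hce⟩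

/-- The vertices of the section of `P` at height `t`, heights being measured by `L`. -/
def sectionVertices (P : Set E) (L : E →ₗ[ℝ] ℝ) (t : ℝ) : Set E :=
  (P ∩ {x | L x = t}).extremePoints ℝ

variable {P V : Set E} {L : E →ₗ[ℝ] ℝ} {t : ℝ} {x y u w : E}

theorem mem_extremePoints_of_mem_extremePoints_inter_sublevel (hP : Convex ℝ P)
    (hx : x ∈ (P ∩ {y | L y ≤ t}).extremePoints ℝ) (hxt : L x < t) : x ∈ P.extremePoints ℝ := by
  refine ⟨hx.1.1, fun a ha b hb hxab => ?_⟩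
  -- A small homothety centred at `x` moves `a` and `b` below level `t`.
  have hnear (q : E) : ∀ᶠ ε : ℝ in 𝓝[>] 0, L (AffineMap.homothety x ε q) < t := by
    have hcont : Continuous fun ε : ℝ => L (AffineMap.homothety x ε q) := by
      simp only [AffineMap.homothety_apply, vsub_eq_sub, vadd_eq_add, map_add, map_smul,
        smul_eq_mul]
      fun_prop
    exact nhdsWithin_le_nhds ((hcont.tendsto 0).eventually_lt_const (by simpa using hxt))
  obtain ⟨ε, ⟨hεa, hεb⟩, hε0, hε1⟩ := ((hnear a).and (hnear b)).and
    (Ioc_mem_nhdsGT zero_lt_one) |>.exists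
  have hmaps {q : E} (hq : q ∈ P) (hqt : L (AffineMap.homothety x ε q) < t) :
      AffineMap.homothety x ε q ∈ P ∩ {y | L y ≤ t} :=
    ⟨homothety_mem_of_convex hP hx.1.1 hq ⟨hε0.le, hε1⟩, hqt.le⟩
  refine eq_left_of_map_mem_extremePoints (homothety_injective x hε0.ne') ?_ (hmaps ha hεa)
    (hmaps hb hεb) hxab
  rwa [AffineMap.homothety_apply_same]

theorem isExtreme_section_sublevel (P : Set E) (L : E →ₗ[ℝ] ℝ) (t : ℝ) :
    IsExtreme ℝ (P ∩ {x | L x ≤ t}) (P ∩ {x | L x = t}) where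
  subset := inter_subset_inter_right P fun _ hx => le_of_eq hx
  left_mem_of_mem_openSegment := by
    rintro a ⟨haP, hat : L a ≤ t⟩ b ⟨-, hbt : L b ≤ t⟩ x ⟨-, hxt : L x = t⟩ ⟨α, β, hα, hβ, hαβ, rfl⟩
    refine ⟨haP, hat.antisymm ?_⟩
    simp only [map_add, map_smul, smul_eq_mul] at hxt
    obtain rfl : β = 1 - α := by linarith
    nlinarith

theorem extremePoints_inter_sublevel (hP : Convex ℝ P) (L : E →ₗ[ℝ] ℝ) (t : ℝ) :
    (P ∩ {x | L x ≤ t}).extremePoints ℝ =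
      (P.extremePoints ℝ ∩ {x | L x < t}) ∪ sectionVertices P L t := by
  refine Subset.antisymm (fun x hx => ?_) (union_subset ?_ ?_)
  · have hxle : L x ≤ t := hx.1.2
    rcases hxle.lt_or_eq with hxt | hxt
    · exact .inl ⟨mem_extremePoints_of_mem_extremePoints_inter_sublevel hP hx hxt, hxt⟩
    · exact .inr <| (isExtreme_section_sublevel P L t).extremePoints_eq.ge ⟨⟨hx.1.1, hxt⟩, hx⟩
  · rintro x ⟨hx, hxt : L x < t⟩
    exact inter_extremePoints_subset_extremePoints_of_subset inter_subset_left
      ⟨⟨hx.1, hxt.le⟩, hx⟩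
  · exact (isExtreme_section_sublevel P L t).extremePoints_subset_extremePoints

theorem mem_sectionVertices_of_mem_openSegment (hP : Convex ℝ P) (hy : y ∈ P) (hw : w ∈ P)
    (hx : x ∈ sectionVertices P L (L x)) (hxyw : x ∈ openSegment ℝ y w) :
    y ∈ sectionVertices P L (L y) := by
  -- Contraction towards `w` takes `y` to `x`, and the section through `y` into that through `x`.
  rw [openSegment_symm, openSegment_eq_image_lineMap] at hxyw
  obtain ⟨r, ⟨hr0, hr1⟩, rfl⟩ := hxyw
  rw [← AffineMap.homothety_eq_lineMap] at hx
  have hmaps {q : E} (hq : q ∈ P ∩ {z | L z = L y}) : AffineMap.homothety w r q ∈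
      P ∩ {z | L z = L (AffineMap.homothety w r y)} := by
    refine ⟨homothety_mem_of_convex hP hw hq.1 ⟨hr0.le, hr1.le⟩, ?_⟩
    have hqy : L q = L y := hq.2
    simp [AffineMap.homothety_apply, hqy]
  exact ⟨⟨hy, rfl⟩, fun a ha b hb hyab => eq_left_of_map_mem_extremePoints
    (homothety_injective w hr0.ne') hx (hmaps ha) (hmaps hb) hyab⟩

theorem mem_sectionVertices_of_mem_openSegment_of_mem_openSegment (hP : Convex ℝ P) (hu : u ∈ P)
    (hw : w ∈ P) (hx : x ∈ sectionVertices P L (L x)) (hxuw : x ∈ openSegment ℝ u w)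
    (hyuw : y ∈ openSegment ℝ u w) : y ∈ sectionVertices P L (L y) := by
  have hyP : y ∈ P := hP.openSegment_subset hu hw hyuw
  have hy_range : y ∈ range (AffineMap.lineMap u w : ℝ → E) := by
    rw [openSegment_eq_image_lineMap] at hyuw
    exact image_subset_range _ _ hyuw
  rcases openSegment_subset_union u w hy_range hxuw with rfl | hxuy | hxyw
  · exact hx
  · exact mem_sectionVertices_of_mem_openSegment hP hyP hu hx (openSegment_symm ℝ u y ▸ hxuy)
  · exact mem_sectionVertices_of_mem_openSegment hP hyP hw hx hxyw

theorem exists_mem_openSegment_of_mem_sectionVertices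
    (hx : x ∈ sectionVertices (convexHull ℝ V) L t) (ht : t ∉ L '' V) :
    ∃ u ∈ V, ∃ w ∈ V, L u < t ∧ t < L w ∧ x ∈ openSegment ℝ u w := by
  have hxt : L x = t := hx.1.2
  obtain ⟨ι, _, p, c, hpV, -, hpos, hsum, rfl⟩ := eq_pos_convex_span_of_mem_convexHull hx.1.1
  have hne (i : ι) : L (p i) ≠ t := fun h => ht ⟨p i, hpV (mem_range_self i), h⟩
  have hx_hull : ∑ i, c i • p i ∈ convexHull ℝ (range p) :=
    mem_convexHull_of_exists_fintype c p (fun i => (hpos i).le) hsum mem_range_self rfl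
  obtain ⟨_, ⟨i, rfl⟩, hi⟩ :=
    (L.concaveOn convex_univ).exists_le_of_mem_convexHull (subset_univ _) hx_hull
  obtain ⟨_, ⟨j, rfl⟩, hj⟩ :=
    (L.convexOn convex_univ).exists_ge_of_mem_convexHull (subset_univ _) hx_hull
  replace hi := (hi.trans_eq hxt).lt_of_ne (hne i)
  replace hj := (hxt.symm.trans_le hj).lt_of_ne (hne j).symm
  obtain ⟨y, hy, hyt⟩ : t ∈ L '' openSegment ℝ (p i) (p j) := by
    rw [show L '' _ = _ from image_openSegment ℝ L.toAffineMap _ _, LinearMap.coe_toAffineMap,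
      openSegment_eq_Ioo (hi.trans hj)]
    exact ⟨hi, hj⟩
  have hy_hull : y ∈ convexHull ℝ (range p) :=
    (convex_convexHull ℝ _).openSegment_subset (subset_convexHull ℝ _ (mem_range_self i))
      (subset_convexHull ℝ _ (mem_range_self j)) hy
  -- The weights of `x` being positive, the segment from `y` to `x` extends beyond `x`; since it
  -- stays in the section, of which `x` is a vertex, `x = y`.
  obtain ⟨r, hr, hxyr⟩ := exists_mem_convexHull_range_mem_openSegment hpos hsum hy_hull
  have hrt : L r = t := by
    have := map_mem_openSegment L.toAffineMap hxyr
    simp only [LinearMap.coe_toAffineMap, hxt, hyt] at this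
    exact (left_mem_openSegment_iff.1 this).symm
  have hxy : y = ∑ i, c i • p i :=
    hx.2 ⟨convexHull_mono hpV hy_hull, hyt⟩ ⟨convexHull_mono hpV hr, hrt⟩ hxyr
  exact ⟨p i, hpV (mem_range_self i), p j, hpV (mem_range_self j), hi, hj, hxy ▸ hy⟩

/-- The point at height `t` on the line through `u` and `w`, an affine function of `t`; the division
makes it the constant `u` when `L u = L w`. -/
def crossingPoint (L : E →ₗ[ℝ] ℝ) (u w : E) : ℝ →ᵃ[ℝ] E :=
  (AffineMap.lineMap u w).comp ((L w - L u)⁻¹ • (AffineMap.id ℝ ℝ - AffineMap.const ℝ ℝ (L u)))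

theorem crossingPoint_apply (L : E →ₗ[ℝ] ℝ) (u w : E) (t : ℝ) :
    crossingPoint L u w t = AffineMap.lineMap u w ((t - L u) / (L w - L u)) := by
  simp [crossingPoint, inv_mul_eq_div]

theorem crossingPoint_mem_openSegment (hut : L u < t) (htw : t < L w) :
    crossingPoint L u w t ∈ openSegment ℝ u w := by
  have h : 0 < L w - L u := by linarith
  rw [crossingPoint_apply]
  exact lineMap_mem_openSegment ℝ u w ⟨div_pos (by linarith) h, (div_lt_one h).2 (by linarith)⟩

theorem map_crossingPoint (h : L u ≠ L w) (t : ℝ) : L (crossingPoint L u w t) = t := by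
  have : L w - L u ≠ 0 := sub_ne_zero.2 h.symm
  simp [crossingPoint_apply, AffineMap.lineMap_apply, this]

theorem crossingPoint_map_of_mem_openSegment (h : L u ≠ L w) (hx : x ∈ openSegment ℝ u w) :
    crossingPoint L u w (L x) = x := by
  rw [openSegment_eq_image_lineMap] at hx
  obtain ⟨r, -, rfl⟩ := hx
  have : L w - L u ≠ 0 := sub_ne_zero.2 h.symm
  simp [crossingPoint_apply, AffineMap.lineMap_apply, this]

theorem eventually_ne_of_affineMap {f g : ℝ →ᵃ[ℝ] E} (hfg : f t ≠ g t) :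
    ∀ᶠ s in 𝓝 t, f s ≠ g s := by
  have hsub : {s | f s = g s}.Subsingleton := fun a ha b hb => by
    by_contra hab
    obtain ⟨r, rfl⟩ : ∃ r, AffineMap.lineMap a b r = t :=
      ⟨_, (crossingPoint_apply .id a b t).symm.trans (map_crossingPoint (L := .id) hab t)⟩
    exact hfg (by rw [AffineMap.apply_lineMap, AffineMap.apply_lineMap, ha, hb])
  exact hsub.isClosed.isOpen_compl.mem_nhds hfg

theorem sectionVertices_subset_image_crossingPoint (V : Set E) (ht : t ∉ L '' V) :
    sectionVertices (convexHull ℝ V) L t ⊆ (fun e => crossingPoint L e.1 e.2 t) '' (V ×ˢ V) := by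
  intro x hx
  obtain ⟨u, hu, w, hw, hut, htw, hxuw⟩ := exists_mem_openSegment_of_mem_sectionVertices hx ht
  have hxt : L x = t := hx.1.2
  exact ⟨(u, w), ⟨hu, hw⟩, hxt ▸ crossingPoint_map_of_mem_openSegment (hut.trans htw).ne hxuw⟩

theorem finite_sectionVertices (hV : V.Finite) (ht : t ∉ L '' V) :
    (sectionVertices (convexHull ℝ V) L t).Finite :=
  ((hV.prod hV).image _).subset (sectionVertices_subset_image_crossingPoint V ht)

theorem ncard_sectionVertices_le (hV : V.Finite) (ht : t ∉ L '' V) :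
    (sectionVertices (convexHull ℝ V) L t).ncard ≤ (V ×ˢ V).ncard :=
  (ncard_le_ncard (sectionVertices_subset_image_crossingPoint V ht) ((hV.prod hV).image _)).trans
    (ncard_image_le (hV.prod hV))

theorem ncard_extremePoints_inter_sublevel (hP : Convex ℝ P) (hfin : (P.extremePoints ℝ).Finite)
    (ht : (sectionVertices P L t).Finite) :
    ((P ∩ {x | L x ≤ t}).extremePoints ℝ).ncard =
      (P.extremePoints ℝ ∩ {x | L x < t}).ncard + (sectionVertices P L t).ncard := by
  rw [extremePoints_inter_sublevel hP, ncard_union_eq _ (hfin.inter_of_left _) ht]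
  refine disjoint_left.2 fun x hx hx' => ?_
  have hlt : L x < t := hx.2
  have heq : L x = t := hx'.1.2
  exact hlt.ne heq

theorem ncard_extremePoints_inter_superlevel (hP : Convex ℝ P) (hfin : (P.extremePoints ℝ).Finite)
    (ht : (sectionVertices P L t).Finite) :
    ((P ∩ {x | t ≤ L x}).extremePoints ℝ).ncard =
      (P.extremePoints ℝ ∩ {x | t < L x}).ncard + (sectionVertices P L t).ncard := by
  have hsection : sectionVertices P (-L) (-t) = sectionVertices P L t := by
    simp [sectionVertices]
  have := ncard_extremePoints_inter_sublevel (L := -L) (t := -t) hP hfin (hsection ▸ ht)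
  simpa [hsection] using this

theorem ncard_extremePoints_sublevel_add_superlevel (hP : Convex ℝ P)
    (hfin : (P.extremePoints ℝ).Finite) (ht : (sectionVertices P L t).Finite)
    (hgen : ∀ v ∈ P.extremePoints ℝ, L v ≠ t) :
    ((P ∩ {x | L x ≤ t}).extremePoints ℝ).ncard + ((P ∩ {x | t ≤ L x}).extremePoints ℝ).ncard =
      (P.extremePoints ℝ).ncard + 2 * (sectionVertices P L t).ncard := by
  have habove : P.extremePoints ℝ ∩ {x | t < L x} = P.extremePoints ℝ \ {x | L x < t} := by
    ext v
    simpa using fun hv => ⟨le_of_lt, fun h => h.lt_of_ne (hgen v hv).symm⟩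
  rw [ncard_extremePoints_inter_sublevel hP hfin ht,
    ncard_extremePoints_inter_superlevel hP hfin ht, habove,
    ← ncard_inter_add_ncard_sdiff_eq_ncard (P.extremePoints ℝ) {x | L x < t} hfin]
  ring

theorem ae_notMem_image (hV : V.Finite) (L : E →ₗ[ℝ] ℝ) : ∀ᵐ t : ℝ, t ∉ L '' V :=
  measure_eq_zero_iff_ae_notMem.1 ((hV.image L).measure_zero volume)

theorem eventually_ncard_sectionVertices_le (hV : V.Finite) (ht : t ∉ L '' V) :
    ∀ᶠ s in 𝓝 t, (sectionVertices (convexHull ℝ V) L t).ncard ≤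
      (sectionVertices (convexHull ℝ V) L s).ncard := by
  have hfin := finite_sectionVertices hV ht
  have hlevel {x} (hx : x ∈ sectionVertices (convexHull ℝ V) L t) : L x = t := hx.1.2
  choose! u hu w hw hut htw hxuw using fun x (hx : x ∈ sectionVertices (convexHull ℝ V) L t) =>
    exists_mem_openSegment_of_mem_sectionVertices hx ht
  let γ (s : ℝ) (x : E) : E := crossingPoint L (u x) (w x) s
  have hγ_self : ∀ x ∈ sectionVertices (convexHull ℝ V) L t, γ t x = x := fun x hx => by
    simpa only [hlevel hx] using
      crossingPoint_map_of_mem_openSegment ((hut x hx).trans (htw x hx)).ne (hxuw x hx)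
  have hγ_mem : ∀ᶠ s in 𝓝 t, ∀ x ∈ sectionVertices (convexHull ℝ V) L t,
      γ s x ∈ sectionVertices (convexHull ℝ V) L s := by
    refine (eventually_all_finite hfin).2 fun x hx => ?_
    filter_upwards [Ioo_mem_nhds (hut x hx) (htw x hx)] with s hs
    have hγs := mem_sectionVertices_of_mem_openSegment_of_mem_openSegment (convex_convexHull ℝ V)
      (subset_convexHull ℝ V (hu x hx)) (subset_convexHull ℝ V (hw x hx)) ((hlevel hx).symm ▸ hx)
      (hxuw x hx) (crossingPoint_mem_openSegment hs.1 hs.2)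
    rwa [map_crossingPoint (hs.1.trans hs.2).ne] at hγs
  have hγ_inj : ∀ᶠ s in 𝓝 t, InjOn (γ s) (sectionVertices (convexHull ℝ V) L t) := by
    refine (eventually_all_finite hfin).2 fun x hx => (eventually_all_finite hfin).2 fun y hy => ?_
    rcases eq_or_ne x y with rfl | hxy
    · exact .of_forall fun _ _ => rfl
    · have hne : γ t x ≠ γ t y := by rwa [hγ_self x hx, hγ_self y hy]
      exact (eventually_ne_of_affineMap hne).mono fun s hs h => absurd h hs
  filter_upwards [hγ_mem, hγ_inj, (hV.image L).isClosed.isOpen_compl.mem_nhds ht]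
    with s hmem hinj hs
  exact ncard_le_ncard_of_injOn (γ s) hmem hinj (finite_sectionVertices hV hs)

theorem lowerSemicontinuous_indicator_ncard_sectionVertices (hV : V.Finite) (L : E →ₗ[ℝ] ℝ) :
    LowerSemicontinuous
      ((L '' V)ᶜ.indicator fun t => (sectionVertices (convexHull ℝ V) L t).ncard) := by
  intro t k hk
  by_cases ht : t ∈ L '' V
  · simp [ht] at hk
  · filter_upwards [eventually_ncard_sectionVertices_le hV ht,
      (hV.image L).isClosed.isOpen_compl.mem_nhds ht] with s hs hsV
    rw [indicator_of_mem ht] at hk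
    rw [indicator_of_mem hsV]
    exact hk.trans_le hs

theorem intervalIntegrable_ncard_sectionVertices (hV : V.Finite) (L : E →ₗ[ℝ] ℝ) (a b : ℝ) :
    IntervalIntegrable (fun t => ((sectionVertices (convexHull ℝ V) L t).ncard : ℝ))
      volume a b := by
  have hmeas : Measurable
      ((L '' V)ᶜ.indicator fun t => (sectionVertices (convexHull ℝ V) L t).ncard) :=
    (lowerSemicontinuous_indicator_ncard_sectionVertices hV L).measurable
  have haemeas : AEStronglyMeasurable
      (fun t => ((sectionVertices (convexHull ℝ V) L t).ncard : ℝ)) volume := by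
    refine (measurable_from_nat (f := Nat.cast)).comp hmeas |>.aestronglyMeasurable.congr ?_
    filter_upwards [ae_notMem_image hV L] with t ht
    simp [ht]
  refine (intervalIntegrable_const (c := ((V ×ˢ V).ncard : ℝ))).mono_fun haemeas.restrict ?_
  filter_upwards [ae_restrict_of_ae (ae_notMem_image hV L)] with t ht
  rw [Real.norm_natCast, Real.norm_natCast]
  exact_mod_cast ncard_sectionVertices_le hV ht

theorem expected_cut_vertices_general (hV : V.Finite) (L : E →ₗ[ℝ] ℝ) {a b : ℝ} (hab : a ≠ b) :
    (b - a)⁻¹ * ∫ t in a..b,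
        ((((convexHull ℝ V ∩ {x | L x ≤ t}).extremePoints ℝ).ncard : ℝ) +
          (((convexHull ℝ V ∩ {x | t ≤ L x}).extremePoints ℝ).ncard : ℝ)) / 2 =
      (((convexHull ℝ V).extremePoints ℝ).ncard : ℝ) / 2 +
        (b - a)⁻¹ * ∫ t in a..b, ((sectionVertices (convexHull ℝ V) L t).ncard : ℝ) := by
  have hcut : ∀ᵐ t : ℝ,
      ((((convexHull ℝ V ∩ {x | L x ≤ t}).extremePoints ℝ).ncard : ℝ) +
          (((convexHull ℝ V ∩ {x | t ≤ L x}).extremePoints ℝ).ncard : ℝ)) / 2 =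
        (((convexHull ℝ V).extremePoints ℝ).ncard : ℝ) / 2 +
          ((sectionVertices (convexHull ℝ V) L t).ncard : ℝ) := by
    filter_upwards [ae_notMem_image hV L] with t ht
    have hcount := ncard_extremePoints_sublevel_add_superlevel (convex_convexHull ℝ V)
      (hV.subset extremePoints_convexHull_subset) (finite_sectionVertices hV ht)
      fun v hv hvt => ht ⟨v, extremePoints_convexHull_subset hv, hvt⟩
    rw [← Nat.cast_add, hcount]
    push_cast
    ring
  rw [intervalIntegral.integral_congr_ae (hcut.mono fun t ht _ => ht),
    intervalIntegral.integral_add intervalIntegrable_const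
      (intervalIntegrable_ncard_sectionVertices hV L a b),
    intervalIntegral.integral_const, smul_eq_mul, mul_add,
    inv_mul_cancel_left₀ (sub_ne_zero.2 hab.symm)]

theorem csInf_lt_csSup_of_nontrivial {α : Type*} [ConditionallyCompleteLinearOrder α] {S : Set α}
    (hS : S.Nontrivial) (hbelow : BddBelow S) (habove : BddAbove S) : sInf S < sSup S := by
  obtain ⟨x, hx, y, hy, hxy⟩ := hS.exists_lt
  exact (csInf_le hbelow hx).trans_lt (hxy.trans_le (le_csSup habove hy))

theorem nontrivial_image_of_interior_nonempty [TopologicalSpace E] [IsTopologicalAddGroup E]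
    [ContinuousSMul ℝ E] (hL : L ≠ 0) (hP : (interior P).Nonempty) : (L '' P).Nontrivial := by
  obtain ⟨x, hx⟩ := hP
  have hnhds : L '' P ∈ 𝓝 (L x) :=
    (LinearMap.isOpenMap_of_finiteDimensional L (LinearMap.surjective hL)).image_mem_nhds
      (mem_interior_iff_mem_nhds.1 hx)
  exact (infinite_of_mem_nhds _ hnhds).nontrivial

theorem tMin_lt_tMax {d : ℕ} {P : Set (Fin d → ℝ)} (hP : IsCompact P)
    (hint : (interior P).Nonempty) {z : Fin d → ℝ} (hz : z ≠ 0) : tMin P z < tMax P z := by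
  have hL : dotProductEquiv ℝ (Fin d) z ≠ 0 := (dotProductEquiv ℝ (Fin d)).map_ne_zero_iff.2 hz
  have hcompact : IsCompact (dotProductEquiv ℝ (Fin d) z '' P) :=
    hP.image (LinearMap.continuous_of_finiteDimensional _)
  exact csInf_lt_csSup_of_nontrivial (nontrivial_image_of_interior_nonempty hL hint)
    hcompact.bddBelow hcompact.bddAbove

end CutVertices

/-- For a convex polytope `P ⊂ ℝ^d` with nonempty interior and `V₀`
vertices, the expected average vertex number of the two pieces of a uniform random cut
orthogonal to `z` equals `V₀/2 + A(P,z)`. -/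
theorem expected_cut_vertices (d : ℕ) (P : Set (Fin d → ℝ)) (hP : IsPolytope P)
    (hint : (interior P).Nonempty) (z : Fin d → ℝ) (hz : z ≠ 0) :
    (tMax P z - tMin P z)⁻¹ *
      ∫ t in tMin P z..tMax P z,
        (((nVert (P ∩ {x | dotp z x ≤ t}) : ℝ) +
          (nVert (P ∩ {x | t ≤ dotp z x}) : ℝ)) / 2) =
      (nVert P : ℝ) / 2 + avgVert P z := by
  obtain ⟨s, rfl⟩ := hP
  exact expected_cut_vertices_general s.finite_toSet (dotProductEquiv ℝ (Fin d) z)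
    (tMin_lt_tMax (s.finite_toSet.isCompact_convexHull ℝ) hint hz).ne
end
end
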